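/- Every bivariate real stable polynomial p(x,y) of total degree d can be written as p(x,y) = c·det(xA + yB + C) for some real positive semidefinite d×d matrices A, B, a real symmetric d×d matrix C, and a real constant c (Helton–Vinnikov determinantal representation). -/

import Mathlib

open Polynomial MvPolynomial

/-- A bivariate real polynomial is real stable if it is identically zero or does not
vanish when both coordinates have positive imaginary part. -/
def RealStable {k : ℕ} (p : MvPolynomial (Fin k) ℝ) : Prop :=
  p = 0 ∨ ∀ z : Fin k → ℂ, (∀ i, 0 < (z i).im) → MvPolynomial.aeval z p ≠ 0

/-
In the coordinates `t ± x` the homogenization of `p` is a ternary form, which by stability is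
hyperbolic with `|x| < t` in its hyperbolicity cone. If it equals `a * det (t + x A + y B)` with
`A` and `B` symmetric, then `1 + A` and `1 - A` are positive semidefinite because this determinant
does not vanish on the cone, and undoing the change of coordinates gives the representation of `p`.

Every hyperbolic form `f` has such a representation by continuity. Representable forms are closed,
since the roots of `f` bound the entries of `A` and `B`. They are also open near a strictly
hyperbolic form without nonreal singular points: there `x A + y B` is nonderogatory for all complex
`(x, y) ≠ 0`, so if `tr (S adj (t + x A + y B)) = 0` for a symmetric `S`, then `S` is the commutator
of `A + y B` with a unique skew matrix, which is entire in `y` and vanishes at infinity; so `S = 0`.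
By a dimension count `S ↦ tr (S adj (t + x A + y B))` is then onto the forms of degree `d - 1`, and
the representation map is a submersion. Finally, Nuij's path joins `f` through strictly hyperbolic
forms to one with an explicit representation, and as nonreal singularities have real codimension
two, a generic path avoids them.
-/

/-- The exponents of the monomials of degree `d` in three variables. -/
abbrev TernaryExponent (d : ℕ) : Type := (Finset.univ : Finset (Fin 3)).finsuppAntidiag d

theorem TernaryExponent.sum_eq {d : ℕ} (m : TernaryExponent d) : m.1 0 + m.1 1 + m.1 2 = d := by
  simpa only [Fin.sum_univ_three] using (Finset.mem_finsuppAntidiag.1 m.2).1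

theorem TernaryExponent.card_eq (d : ℕ) :
    Fintype.card (TernaryExponent d) = (d + 2).choose 2 := by
  rw [Fintype.card_coe, Finset.card_finsuppAntidiag_nat_eq_choose, Finset.card_univ,
    Fintype.card_fin, show 3 + d - 1 = d + 2 by lia, ← Nat.choose_symm_add]

/-- Real homogeneous polynomials of degree `d` in the variables `t, x, y`, encoded by their
coefficients so that the space of forms carries the topology of `ℝⁿ`. -/
abbrev TernaryForm (d : ℕ) : Type := TernaryExponent d → ℝ

namespace TernaryForm

variable {d : ℕ} {K L : Type*} [CommRing K] [Algebra ℝ K] [CommRing L] [Algebra ℝ L]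

/-- The value of a form at a point with coordinates in a real algebra. -/
def eval (f : TernaryForm d) (t x y : K) : K :=
  ∑ m, f m • (t ^ m.1 0 * x ^ m.1 1 * y ^ m.1 2)

/-- The partial derivative `∂f/∂t`. -/
def evalDerivT (f : TernaryForm d) (t x y : K) : K :=
  ∑ m, f m • (m.1 0 * t ^ (m.1 0 - 1) * x ^ m.1 1 * y ^ m.1 2)

/-- The partial derivative `∂f/∂x`. -/
def evalDerivX (f : TernaryForm d) (t x y : K) : K :=
  ∑ m, f m • (t ^ m.1 0 * (m.1 1 * x ^ (m.1 1 - 1)) * y ^ m.1 2)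

/-- The divided difference `(f(t, x, y) - f(s, x, y)) / (t - s)`, extended to `t = s`. -/
def dividedDiffT (f : TernaryForm d) (t s x y : K) : K :=
  ∑ m, f m • ((∑ i ∈ Finset.range (m.1 0), t ^ i * s ^ (m.1 0 - 1 - i)) * x ^ m.1 1 * y ^ m.1 2)

theorem map_eval (φ : K →ₐ[ℝ] L) (f : TernaryForm d) (t x y : K) :
    φ (f.eval t x y) = f.eval (φ t) (φ x) (φ y) := by
  simp [eval]

theorem ofReal_eval (f : TernaryForm d) (t x y : ℝ) :
    ((f.eval t x y : ℝ) : ℂ) = f.eval (t : ℂ) (x : ℂ) (y : ℂ) :=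
  f.map_eval Complex.ofRealAm t x y

open ComplexConjugate in
theorem conj_eval (f : TernaryForm d) (t x y : ℂ) :
    conj (f.eval t x y) = f.eval (conj t) (conj x) (conj y) :=
  f.map_eval Complex.conjAe.toAlgHom t x y

theorem eval_add (f g : TernaryForm d) (t x y : K) :
    (f + g).eval t x y = f.eval t x y + g.eval t x y := by
  simp [eval, add_smul, Finset.sum_add_distrib]

theorem eval_smul (r : ℝ) (f : TernaryForm d) (t x y : K) :
    (r • f).eval t x y = r • f.eval t x y := by
  simp [eval, Finset.smul_sum, mul_smul]

theorem sub_mul_dividedDiffT (f : TernaryForm d) (t s x y : K) :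
    (t - s) * f.dividedDiffT t s x y = f.eval t x y - f.eval s x y := by
  simp only [dividedDiffT, eval, Finset.mul_sum, ← Finset.sum_sub_distrib, ← smul_sub,
    mul_smul_comm]
  refine Finset.sum_congr rfl fun m _ => congrArg (f m • ·) ?_
  linear_combination (x ^ m.1 1 * y ^ m.1 2) * (Commute.all t s).mul_geom_sum₂ (m.1 0)

theorem dividedDiffT_self (f : TernaryForm d) (t x y : K) :
    f.dividedDiffT t t x y = f.evalDerivT t x y := by
  simp only [dividedDiffT, evalDerivT, geom_sum₂_self]

theorem eval_mul (f : TernaryForm d) (l t x y : K) :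
    f.eval (l * t) (l * x) (l * y) = l ^ d * f.eval t x y := by
  simp only [eval, Finset.mul_sum, mul_smul_comm]
  refine Finset.sum_congr rfl fun m _ => congrArg (f m • ·) ?_
  have hpow : l ^ d = l ^ m.1 0 * l ^ m.1 1 * l ^ m.1 2 := by
    rw [← pow_add, ← pow_add, m.sum_eq]
  rw [hpow]
  ring

theorem dividedDiffT_mul (f : TernaryForm d) (l t s x y : K) :
    f.dividedDiffT (l * t) (l * s) (l * x) (l * y) * l = l ^ d * f.dividedDiffT t s x y := by
  simp only [dividedDiffT, Finset.mul_sum, Finset.sum_mul, mul_smul_comm, smul_mul_assoc]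
  refine Finset.sum_congr rfl fun m _ => congrArg (f m • ·) <| Finset.sum_congr rfl fun i hi => ?_
  have hpow : l ^ d = l ^ (i + (m.1 0 - 1 - i) + 1 + m.1 1 + m.1 2) := by
    congr 1
    have := m.sum_eq
    have := Finset.mem_range.1 hi
    lia
  rw [hpow]
  ring

theorem eval_axis (f : TernaryForm d) (t : K) :
    f.eval t 0 0 = t ^ d * algebraMap ℝ K (f.eval 1 0 0) := by
  have hmap := f.map_eval (Algebra.ofId ℝ K) 1 0 0
  have hhom := f.eval_mul t 1 0 0
  simp only [map_one, map_zero, mul_one, mul_zero] at hmap hhom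
  rw [hhom, ← hmap, Algebra.ofId_apply]

/-- A form as an element of the polynomial ring. -/
noncomputable def toMvPolynomial (f : TernaryForm d) : MvPolynomial (Fin 3) ℝ :=
  f.eval (MvPolynomial.X 0) (MvPolynomial.X 1) (MvPolynomial.X 2)

/-- The form of degree `d` whose coefficients are those of a given polynomial; it represents the
homogeneous component of degree `d`. -/
noncomputable def ofMvPolynomial (d : ℕ) (q : MvPolynomial (Fin 3) ℝ) : TernaryForm d :=
  fun m => q.coeff m.1

theorem aeval_toMvPolynomial (f : TernaryForm d) (t x y : K) :
    MvPolynomial.aeval ![t, x, y] f.toMvPolynomial = f.eval t x y := by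
  rw [toMvPolynomial, map_eval]
  simp

theorem toMvPolynomial_eq_sum (f : TernaryForm d) :
    f.toMvPolynomial = ∑ m, MvPolynomial.monomial m.1 (f m) := by
  refine Finset.sum_congr rfl fun m _ => ?_
  rw [MvPolynomial.monomial_eq, Finsupp.prod_fintype _ _ (by simp), Fin.prod_univ_three,
    MvPolynomial.smul_eq_C_mul]

theorem isHomogeneous_eval {σ R : Type*} [CommRing R] [Algebra ℝ R] (f : TernaryForm d)
    {t x y : MvPolynomial σ R} (ht : t.IsHomogeneous 1) (hx : x.IsHomogeneous 1)
    (hy : y.IsHomogeneous 1) : (f.eval t x y).IsHomogeneous d := by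
  refine MvPolynomial.IsHomogeneous.sum _ _ _ fun m _ => ?_
  have hmon := ((ht.pow (m.1 0)).mul (hx.pow (m.1 1))).mul (hy.pow (m.1 2))
  rw [one_mul, one_mul, one_mul, m.sum_eq] at hmon
  rw [Algebra.smul_def, IsScalarTower.algebraMap_apply ℝ R (MvPolynomial σ R),
    MvPolynomial.algebraMap_eq]
  exact hmon.C_mul _

theorem ofMvPolynomial_toMvPolynomial (f : TernaryForm d) :
    ofMvPolynomial d f.toMvPolynomial = f := by
  funext m
  rw [ofMvPolynomial, toMvPolynomial_eq_sum, MvPolynomial.coeff_sum, Finset.sum_eq_single m]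
  · simp
  · intro b _ hb
    rw [MvPolynomial.coeff_monomial, if_neg (Subtype.coe_ne_coe.2 hb)]
  · simp

theorem support_subset_finsuppAntidiag {R : Type*} [CommSemiring R] {q : MvPolynomial (Fin 3) R}
    (hq : q.IsHomogeneous d) :
    q.support ⊆ (Finset.univ : Finset (Fin 3)).finsuppAntidiag d := by
  intro m hm
  rw [Finset.mem_finsuppAntidiag, ← Finsupp.degree_eq_sum]
  exact ⟨by_contra fun h => MvPolynomial.mem_support_iff.1 hm (hq.coeff_eq_zero h),
    Finset.subset_univ _⟩

theorem aeval_eq_sum_ternaryExponent {R S : Type*} [CommSemiring R] [CommSemiring S] [Algebra R S]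
    {q : MvPolynomial (Fin 3) R} (hq : q.IsHomogeneous d) (t x y : S) :
    MvPolynomial.aeval ![t, x, y] q =
      ∑ m : TernaryExponent d, q.coeff m.1 • (t ^ m.1 0 * x ^ m.1 1 * y ^ m.1 2) := by
  rw [Finset.sum_coe_sort ((Finset.univ : Finset (Fin 3)).finsuppAntidiag d)
      (fun m => q.coeff m • (t ^ m 0 * x ^ m 1 * y ^ m 2)),
    ← Finset.sum_subset (support_subset_finsuppAntidiag hq) fun m _ hm => by
      rw [MvPolynomial.notMem_support_iff.1 hm, zero_smul],
    MvPolynomial.aeval_def, MvPolynomial.eval₂_eq']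
  simp [Fin.prod_univ_three, Algebra.smul_def]

theorem eval_ofMvPolynomial {q : MvPolynomial (Fin 3) ℝ} (hq : q.IsHomogeneous d) (t x y : K) :
    (ofMvPolynomial d q).eval t x y = MvPolynomial.aeval ![t, x, y] q :=
  (aeval_eq_sum_ternaryExponent hq t x y).symm

/-- The form of degree `d` whose coefficients are the real parts of those of a given complex
polynomial. -/
noncomputable def realPart (d : ℕ) (q : MvPolynomial (Fin 3) ℂ) : TernaryForm d :=
  fun m => (q.coeff m.1).re

theorem eval_realPart {q : MvPolynomial (Fin 3) ℂ} (hq : q.IsHomogeneous d) (t x y : ℝ) :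
    (realPart d q).eval t x y = (MvPolynomial.aeval ![(t : ℂ), (x : ℂ), (y : ℂ)] q).re := by
  rw [aeval_eq_sum_ternaryExponent hq, Complex.re_sum]
  refine Finset.sum_congr rfl fun m _ => ?_
  simp only [realPart, smul_eq_mul, ← Complex.ofReal_pow, ← Complex.ofReal_mul,
    Complex.re_mul_ofReal]

theorem eq_of_eval_eq {f g : TernaryForm d} (h : ∀ t x y : ℝ, f.eval t x y = g.eval t x y) :
    f = g := by
  rw [← ofMvPolynomial_toMvPolynomial f, ← ofMvPolynomial_toMvPolynomial g]
  congr 1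
  refine MvPolynomial.funext fun v => ?_
  have hv : ![v 0, v 1, v 2] = v := by
    ext i
    fin_cases i <;> rfl
  have hev := h (v 0) (v 1) (v 2)
  rwa [← aeval_toMvPolynomial, ← aeval_toMvPolynomial, hv] at hev

/-- Evaluation at a real point, as a linear functional on forms. -/
def evalLinear (d : ℕ) (p : ℝ × ℝ × ℝ) : TernaryForm d →ₗ[ℝ] ℝ where
  toFun f := f.eval p.1 p.2.1 p.2.2
  map_add' f g := eval_add f g p.1 p.2.1 p.2.2
  map_smul' r f := eval_smul r f p.1 p.2.1 p.2.2

theorem span_range_evalLinear (d : ℕ) : Submodule.span ℝ (Set.range (evalLinear d)) = ⊤ := by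
  refine Submodule.span_eq_top_of_ne_zero fun f hf => ?_
  contrapose! hf
  refine eq_of_eval_eq fun t x y => ?_
  rw [show (0 : TernaryForm d).eval t x y = 0 from (evalLinear d (t, x, y)).map_zero]
  exact hf _ ⟨(t, x, y), rfl⟩

theorem exists_apply_eq_sum_eval (m : TernaryExponent d) :
    ∃ w : ℝ × ℝ × ℝ →₀ ℝ, ∀ f : TernaryForm d,
      f m = ∑ p ∈ w.support, w p * f.eval p.1 p.2.1 p.2.2 := by
  have hm : LinearMap.proj m ∈ Submodule.span ℝ (Set.range (evalLinear d)) := by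
    rw [span_range_evalLinear]
    trivial
  obtain ⟨w, hw⟩ := Finsupp.mem_span_range_iff_exists_finsupp.1 hm
  refine ⟨w, fun f => ?_⟩
  simpa [Finsupp.sum, evalLinear] using (LinearMap.congr_fun hw f).symm

theorem continuous_of_continuous_eval {α : Type*} [TopologicalSpace α] {F : α → TernaryForm d}
    (hF : ∀ t x y : ℝ, Continuous fun a => (F a).eval t x y) : Continuous F := by
  refine continuous_pi fun m => ?_
  obtain ⟨w, hw⟩ := exists_apply_eq_sum_eval m
  simp only [hw]
  fun_prop

theorem contDiff_of_contDiff_eval {V : Type*} [NormedAddCommGroup V] [NormedSpace ℝ V] {k : ℕ∞}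
    {F : V → TernaryForm d} (hF : ∀ t x y : ℝ, ContDiff ℝ k fun a => (F a).eval t x y) :
    ContDiff ℝ k F := by
  refine contDiff_pi.2 fun m => ?_
  obtain ⟨w, hw⟩ := exists_apply_eq_sum_eval m
  simp only [hw]
  fun_prop

section Continuity

variable {α : Type*} [TopologicalSpace α] [TopologicalSpace K] [IsTopologicalRing K]
  [ContinuousSMul ℝ K] {F : α → TernaryForm d} {t s x y : α → K}

@[fun_prop]
theorem continuous_eval (hF : Continuous F) (ht : Continuous t) (hx : Continuous x)
    (hy : Continuous y) : Continuous fun a => (F a).eval (t a) (x a) (y a) := by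
  unfold eval
  fun_prop

@[fun_prop]
theorem continuous_dividedDiffT (hF : Continuous F) (ht : Continuous t) (hs : Continuous s)
    (hx : Continuous x) (hy : Continuous y) :
    Continuous fun a => (F a).dividedDiffT (t a) (s a) (x a) (y a) := by
  unfold dividedDiffT
  fun_prop

end Continuity

theorem hasDerivAt_eval_t (f : TernaryForm d) (t x y : ℂ) :
    HasDerivAt (fun t => f.eval t x y) (f.evalDerivT t x y) t := by
  refine HasDerivAt.fun_sum fun m _ => HasDerivAt.fun_const_smul _ ?_
  exact ((hasDerivAt_pow (m.1 0) t).mul_const _).mul_const _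

theorem hasDerivAt_eval_x (f : TernaryForm d) (t x y : ℂ) :
    HasDerivAt (fun x => f.eval t x y) (f.evalDerivX t x y) x := by
  refine HasDerivAt.fun_sum fun m _ => HasDerivAt.fun_const_smul _ ?_
  exact ((hasDerivAt_pow (m.1 1) x).const_mul _).mul_const _

/-- The form as a polynomial in `t`, at fixed complex `x` and `y`. -/
noncomputable def polyT (f : TernaryForm d) (x y : ℂ) : Polynomial ℂ :=
  f.eval Polynomial.X (Polynomial.C x) (Polynomial.C y)

theorem eval_polyT (f : TernaryForm d) (t x y : ℂ) : (f.polyT x y).eval t = f.eval t x y := by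
  have h := f.map_eval ((Polynomial.aeval t).restrictScalars ℝ) Polynomial.X (Polynomial.C x)
    (Polynomial.C y)
  simpa [polyT] using h

theorem eval_derivative_polyT (f : TernaryForm d) (t x y : ℂ) :
    (f.polyT x y).derivative.eval t = f.evalDerivT t x y := by
  have h := (f.polyT x y).hasDerivAt t
  simp only [eval_polyT] at h
  exact h.unique (f.hasDerivAt_eval_t t x y)

end TernaryForm

/-- A complex polynomial is real-rooted if it has no nonreal root; the zero polynomial is not
real-rooted. -/
def IsRealRooted (φ : Polynomial ℂ) : Prop :=
  ∀ t : ℂ, φ.eval t = 0 → t.im = 0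

/-- The average of the two translates of a polynomial by `± a i`. -/
noncomputable def imShiftAverage (a : ℝ) (φ : Polynomial ℂ) : Polynomial ℂ :=
  Polynomial.C (1 / 2) * (φ.comp (Polynomial.X + Polynomial.C (a * Complex.I)) +
    φ.comp (Polynomial.X - Polynomial.C (a * Complex.I)))

theorem eval_imShiftAverage (a : ℝ) (φ : Polynomial ℂ) (t : ℂ) :
    (imShiftAverage a φ).eval t =
      1 / 2 * (φ.eval (t + a * Complex.I) + φ.eval (t - a * Complex.I)) := by
  simp [imShiftAverage]

theorem derivative_imShiftAverage (a : ℝ) (φ : Polynomial ℂ) :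
    (imShiftAverage a φ).derivative = imShiftAverage a φ.derivative := by
  simp [imShiftAverage, Polynomial.derivative_comp]

theorem imShiftAverage_zero (φ : Polynomial ℂ) : imShiftAverage 0 φ = φ := by
  refine Polynomial.funext fun t => ?_
  rw [eval_imShiftAverage, Complex.ofReal_zero, zero_mul, add_zero, sub_zero]
  ring

theorem norm_multiset_prod_sub_lt {m : Multiset ℂ} {z w : ℂ} (hm : m ≠ 0)
    (h : ∀ r ∈ m, ‖z - r‖ < ‖w - r‖) :
    ‖(m.map (z - ·)).prod‖ < ‖(m.map (w - ·)).prod‖ := by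
  induction m using Multiset.induction_on with
  | empty => exact absurd rfl hm
  | cons r m ih =>
    simp only [Multiset.map_cons, Multiset.prod_cons, norm_mul]
    have hr := h r (Multiset.mem_cons_self r m)
    rcases eq_or_ne m 0 with rfl | hm'
    · simpa using hr
    · exact mul_lt_mul'' hr (ih hm' fun s hs => h s (Multiset.mem_cons_of_mem hs))
        (norm_nonneg _) (norm_nonneg _)

theorem im_multiset_sum_inv_mul_im_neg {m : Multiset ℂ} {w : ℂ} (hm : m ≠ 0) (hw : w.im ≠ 0)
    (h : ∀ r ∈ m, r.im = 0) : (m.map fun r => 1 / (w - r)).sum.im * w.im < 0 := by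
  have hterm : ∀ r ∈ m, (1 / (w - r)).im * w.im < 0 := fun r hr => by
    have hne : w - r ≠ 0 := fun h0 => hw (by rw [sub_eq_zero.1 h0, h r hr])
    rw [one_div, Complex.inv_im, Complex.sub_im, h r hr, sub_zero, div_mul_eq_mul_div]
    refine div_neg_of_neg_of_pos ?_ (Complex.normSq_pos.2 hne)
    have := mul_self_pos.2 hw
    linarith
  induction m using Multiset.induction_on with
  | empty => exact absurd rfl hm
  | cons r m ih =>
    rw [Multiset.map_cons, Multiset.sum_cons, Complex.add_im, add_mul]
    have hr := hterm r (Multiset.mem_cons_self r m)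
    rcases eq_or_ne m 0 with rfl | hm'
    · simpa using hr
    · exact add_neg hr (ih hm' (fun s hs => h s (Multiset.mem_cons_of_mem hs))
        fun s hs => hterm s (Multiset.mem_cons_of_mem hs))

theorem norm_sub_lt_norm_add {t r : ℂ} {a : ℝ} (hr : r.im = 0) (h : 0 < a * t.im) :
    ‖t - a * Complex.I - r‖ < ‖t + a * Complex.I - r‖ := by
  rw [← sq_lt_sq₀ (norm_nonneg _) (norm_nonneg _), Complex.sq_norm, Complex.sq_norm,
    Complex.normSq_apply, Complex.normSq_apply]
  simp only [Complex.sub_re, Complex.sub_im, Complex.add_re, Complex.add_im, Complex.mul_re,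
    Complex.mul_im, Complex.ofReal_re, Complex.ofReal_im, Complex.I_re, Complex.I_im, hr]
  nlinarith

namespace IsRealRooted

variable {φ : Polynomial ℂ}

theorem ne_zero (hφ : IsRealRooted φ) : φ ≠ 0 := by
  rintro rfl
  exact one_ne_zero (hφ Complex.I Polynomial.eval_zero)

theorem im_eq_zero_of_mem_roots (hφ : IsRealRooted φ) {r : ℂ} (hr : r ∈ φ.roots) : r.im = 0 :=
  hφ r (Polynomial.isRoot_of_mem_roots hr)

theorem eval_add_eval_ne_zero (hφ : IsRealRooted φ) {z w : ℂ}
    (h : ∀ r : ℂ, r.im = 0 → ‖z - r‖ < ‖w - r‖) : φ.eval z + φ.eval w ≠ 0 := by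
  have hs := IsAlgClosed.splits φ
  rw [hs.eval_eq_prod_roots, hs.eval_eq_prod_roots, ← mul_add]
  refine mul_ne_zero (Polynomial.leadingCoeff_ne_zero.2 hφ.ne_zero) fun hsum => ?_
  rcases eq_or_ne φ.roots 0 with h0 | h0
  · norm_num [h0] at hsum
  · have hlt := norm_multiset_prod_sub_lt h0 fun r hr => h r (hφ.im_eq_zero_of_mem_roots hr)
    rw [eq_neg_of_add_eq_zero_left hsum, norm_neg] at hlt
    exact lt_irrefl _ hlt

theorem im_logDeriv_mul_im_neg (hφ : IsRealRooted φ) (hroots : φ.roots ≠ 0) {w : ℂ}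
    (hw : w.im ≠ 0) : (φ.derivative.eval w / φ.eval w).im * w.im < 0 := by
  rw [(IsAlgClosed.splits φ).eval_derivative_div_eval_of_ne_zero fun h => hw (hφ w h)]
  exact im_multiset_sum_inv_mul_im_neg hroots hw fun r hr => hφ.im_eq_zero_of_mem_roots hr

end IsRealRooted

theorem isRealRooted_imShiftAverage {φ : Polynomial ℂ} (hφ : IsRealRooted φ) (a : ℝ) :
    IsRealRooted (imShiftAverage a φ) := by
  intro t ht
  rw [eval_imShiftAverage] at ht
  have hsum := (mul_eq_zero.1 ht).resolve_left (by norm_num)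
  rcases lt_trichotomy (a * t.im) 0 with h | h | h
  · refine absurd hsum (hφ.eval_add_eval_ne_zero fun r hr => ?_)
    simpa [sub_eq_add_neg] using
      norm_sub_lt_norm_add (a := -a) hr (by linarith)
  · rcases mul_eq_zero.1 h with rfl | h
    · exact hφ t (by simpa using hsum)
    · exact h
  · rw [add_comm] at hsum
    exact absurd hsum (hφ.eval_add_eval_ne_zero fun r hr => norm_sub_lt_norm_add hr h)

-- A double root `t` would make the logarithmic derivatives of `φ` at `t ± a i` agree, while their
-- imaginary parts have opposite signs.
theorem eval_derivative_imShiftAverage_ne_zero {φ : Polynomial ℂ}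
    (hφ : IsRealRooted φ) {a : ℝ} (ha : a ≠ 0) {t : ℂ}
    (ht : (imShiftAverage a φ).eval t = 0) :
    (imShiftAverage a φ).derivative.eval t ≠ 0 := by
  intro hd
  have hti := isRealRooted_imShiftAverage hφ a t ht
  rw [derivative_imShiftAverage, eval_imShiftAverage] at hd
  rw [eval_imShiftAverage] at ht
  have hval := eq_neg_of_add_eq_zero_left ((mul_eq_zero.1 ht).resolve_left (by norm_num))
  have hder := eq_neg_of_add_eq_zero_left ((mul_eq_zero.1 hd).resolve_left (by norm_num))
  have hroots : φ.roots ≠ 0 := by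
    intro h0
    have hs := IsAlgClosed.splits φ
    rw [hs.eval_eq_prod_roots, hs.eval_eq_prod_roots, h0, Multiset.map_zero,
      Multiset.map_zero, self_eq_neg] at hval
    simp [hφ.ne_zero] at hval
  have hup := hφ.im_logDeriv_mul_im_neg hroots (w := t + a * Complex.I) (by simpa [hti] using ha)
  have hdown := hφ.im_logDeriv_mul_im_neg hroots (w := t - a * Complex.I) (by simpa [hti] using ha)
  rw [hval, hder, neg_div_neg_eq] at hup
  simp only [Complex.add_im, Complex.sub_im, hti, Complex.mul_im, Complex.ofReal_re,
    Complex.ofReal_im, Complex.I_re, Complex.I_im] at hup hdown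
  linarith

namespace TernaryForm

variable {d : ℕ} {f g : TernaryForm d}

/-- A form is hyperbolic in the direction of the `t`-axis, normalised to be positive there. -/
def IsHyperbolic (f : TernaryForm d) : Prop :=
  0 < f.eval (1 : ℝ) 0 0 ∧ ∀ x y : ℝ, IsRealRooted (f.polyT x y)

/-- A form is strictly hyperbolic if, moreover, its roots in `t` are simple away from the
`t`-axis. -/
def IsStrictlyHyperbolic (f : TernaryForm d) : Prop :=
  0 < f.eval (1 : ℝ) 0 0 ∧ ∀ x y : ℝ, x ≠ 0 ∨ y ≠ 0 → ∀ t : ℂ, f.eval t x y = 0 →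
    t.im = 0 ∧ f.evalDerivT t x y ≠ 0

theorem eval_axis_ne_zero (hf : 0 < f.eval (1 : ℝ) 0 0) {t : ℂ} (ht : t ≠ 0) :
    f.eval t 0 0 ≠ 0 := by
  rw [eval_axis]
  exact mul_ne_zero (pow_ne_zero _ ht) (Complex.ofReal_ne_zero.2 hf.ne')

open ComplexConjugate in
theorem isStrictlyHyperbolic_iff_dividedDiffT :
    f.IsStrictlyHyperbolic ↔ 0 < f.eval (1 : ℝ) 0 0 ∧ ∀ (u : ℂ) (x y : ℝ),
      f.eval u x y = 0 ∧ f.dividedDiffT u (conj u) x y = 0 → u = 0 ∧ x = 0 ∧ y = 0 := by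
  refine and_congr_right fun hlead => ⟨fun hf u x y ⟨h0, h1⟩ => ?_, fun hf x y hxy u h0 => ?_⟩
  · by_cases hxy : x ≠ 0 ∨ y ≠ 0
    · obtain ⟨him, hsimple⟩ := hf x y hxy u h0
      rw [Complex.conj_eq_iff_im.2 him, dividedDiffT_self] at h1
      exact absurd h1 hsimple
    · push Not at hxy
      refine ⟨by_contra fun hu => eval_axis_ne_zero hlead hu ?_, hxy⟩
      simpa [hxy] using h0
  · have hdiff : f.dividedDiffT u (conj u) x y ≠ 0 := fun h1 => by
      have := hf u x y ⟨h0, h1⟩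
      tauto
    have him : u.im = 0 := by
      have hmul := f.sub_mul_dividedDiffT u (conj u) x y
      have hconj := f.conj_eval u x y
      rw [Complex.conj_ofReal, Complex.conj_ofReal, h0, map_zero] at hconj
      rw [h0, ← hconj, sub_zero] at hmul
      exact Complex.conj_eq_iff_im.1
        (sub_eq_zero.1 ((mul_eq_zero.1 hmul).resolve_right hdiff)).symm
    rw [Complex.conj_eq_iff_im.2 him, dividedDiffT_self] at hdiff
    exact ⟨him, hdiff⟩

open ComplexConjugate in
theorem isClosed_setOf_eval_eq_zero_and_dividedDiffT_eq_zero :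
    IsClosed {q : TernaryForm d × ℂ × ℝ × ℝ | q.1.eval q.2.1 q.2.2.1 q.2.2.2 = 0 ∧
      q.1.dividedDiffT q.2.1 (conj q.2.1) q.2.2.1 q.2.2.2 = 0} := by
  have : Continuous fun q : TernaryForm d × ℂ × ℝ × ℝ => conj q.2.1 :=
    Complex.continuous_conj.comp (by fun_prop)
  exact (isClosed_eq (by fun_prop) continuous_const).inter
    (isClosed_eq (by fun_prop) continuous_const)

open ComplexConjugate in
theorem eval_eq_zero_and_dividedDiffT_eq_zero_smul {u : ℂ} {x y r : ℝ} (hr : r ≠ 0)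
    (h : f.eval u x y = 0 ∧ f.dividedDiffT u (conj u) x y = 0) :
    f.eval (r • u) ((r • x : ℝ) : ℂ) ((r • y : ℝ) : ℂ) = 0 ∧
      f.dividedDiffT (r • u) (conj (r • u)) ((r • x : ℝ) : ℂ) ((r • y : ℝ) : ℂ) = 0 := by
  have heval := f.eval_mul (r : ℂ) u x y
  have hdiff := f.dividedDiffT_mul (r : ℂ) u (conj u) x y
  rw [h.1, mul_zero] at heval
  rw [h.2, mul_zero, mul_eq_zero, Complex.ofReal_eq_zero, or_iff_left hr] at hdiff
  simp only [Complex.real_smul, smul_eq_mul, map_mul, Complex.conj_ofReal, Complex.ofReal_mul]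
  exact ⟨heval, hdiff⟩

theorem isOpen_setOf_isStrictlyHyperbolic :
    IsOpen {f : TernaryForm d | f.IsStrictlyHyperbolic} := by
  have hsphere : {f : TernaryForm d | f.IsStrictlyHyperbolic} =
      {f | 0 < f.eval (1 : ℝ) 0 0} ∩ {f | ∀ p ∈ Metric.sphere (0 : ℂ × ℝ × ℝ) 1,
        (f, p) ∉ {q : TernaryForm d × ℂ × ℝ × ℝ | q.1.eval q.2.1 q.2.2.1 q.2.2.2 = 0 ∧
          q.1.dividedDiffT q.2.1 (starRingEnd ℂ q.2.1) q.2.2.1 q.2.2.2 = 0}} := by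
    ext f
    rw [Set.mem_ofPred_eq, isStrictlyHyperbolic_iff_dividedDiffT]
    refine and_congr_right fun _ => ⟨fun h p hp h0 => ?_, fun h u x y h0 => ?_⟩
    · obtain ⟨hu, hx, hy⟩ := h _ _ _ h0
      have hp0 : p = 0 := Prod.ext hu (Prod.ext hx hy)
      simp [hp0] at hp
    · by_contra hne
      have hp : ‖((u, x, y) : ℂ × ℝ × ℝ)‖ ≠ 0 :=
        norm_ne_zero_iff.2 fun h => hne (by simpa using h)
      refine h (‖((u, x, y) : ℂ × ℝ × ℝ)‖⁻¹ • (u, x, y)) (mem_sphere_zero_iff_norm.2 ?_)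
        (eval_eq_zero_and_dividedDiffT_eq_zero_smul (inv_ne_zero hp) h0)
      rw [norm_smul, norm_inv, norm_norm, inv_mul_cancel₀ hp]
  rw [hsphere]
  refine (isOpen_lt continuous_const (by fun_prop)).inter (isOpen_iff_mem_nhds.2 fun f hf => ?_)
  exact (isCompact_sphere _ _).eventually_forall_of_forall_eventually fun p hp =>
    isClosed_setOf_eval_eq_zero_and_dividedDiffT_eq_zero.isOpen_compl.mem_nhds (hf p hp)

/-- The form obtained by averaging the two translates `t ↦ t ± (a x + b y) i`. -/
noncomputable def tiltAverage (a b : ℝ) (f : TernaryForm d) : TernaryForm d :=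
  realPart d (f.eval (MvPolynomial.X 0 + (MvPolynomial.C (a * Complex.I) * MvPolynomial.X 1 +
    MvPolynomial.C (b * Complex.I) * MvPolynomial.X 2)) (MvPolynomial.X 1) (MvPolynomial.X 2))

theorem eval_tiltAverage_eq_re (a b : ℝ) (f : TernaryForm d) (t x y : ℝ) :
    (tiltAverage a b f).eval t x y =
      (f.eval ((t : ℂ) + ((a * x + b * y : ℝ) : ℂ) * Complex.I) x y).re := by
  rw [tiltAverage, eval_realPart (f.isHomogeneous_eval
    ((MvPolynomial.isHomogeneous_X _ 0).add ((MvPolynomial.isHomogeneous_C_mul_X _ 1).add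
      (MvPolynomial.isHomogeneous_C_mul_X _ 2)))
    (MvPolynomial.isHomogeneous_X _ 1) (MvPolynomial.isHomogeneous_X _ 2))]
  have hmap := f.map_eval ((MvPolynomial.aeval ![(t : ℂ), (x : ℂ), (y : ℂ)] :
    MvPolynomial (Fin 3) ℂ →ₐ[ℂ] ℂ).restrictScalars ℝ)
  rw [AlgHom.coe_restrictScalars'] at hmap
  rw [hmap]
  simp only [map_add, map_mul, MvPolynomial.aeval_X, MvPolynomial.aeval_C, Algebra.algebraMap_self,
    RingHom.id_apply, Matrix.cons_val]
  push_cast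
  ring_nf

theorem polyT_tiltAverage (a b : ℝ) (f : TernaryForm d) (x y : ℝ) :
    (tiltAverage a b f).polyT x y = imShiftAverage (a * x + b * y) (f.polyT x y) := by
  refine Polynomial.eq_of_infinite_eval_eq _ _
    (Set.infinite_of_injective_forall_mem Complex.ofReal_injective fun t => ?_)
  rw [Set.mem_ofPred_eq, eval_polyT, ← ofReal_eval, eval_tiltAverage_eq_re, eval_imShiftAverage,
    eval_polyT, eval_polyT]
  have hconj := f.conj_eval ((t : ℂ) + ((a * x + b * y : ℝ) : ℂ) * Complex.I) x y
  simp only [map_add, map_mul, Complex.conj_ofReal, Complex.conj_I, mul_neg, ← sub_eq_add_neg]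
    at hconj
  rw [← hconj, Complex.add_conj]
  push_cast
  ring

/-- The form `(t, x, y) ↦ f(t, s x, s y)`. -/
def scaleXY (s : ℝ) (f : TernaryForm d) : TernaryForm d :=
  fun m => s ^ (m.1 1 + m.1 2) * f m

theorem eval_scaleXY (s : ℝ) (f : TernaryForm d) (t x y : ℂ) :
    (f.scaleXY s).eval t x y = f.eval t (s * x) (s * y) := by
  refine Finset.sum_congr rfl fun m _ => ?_
  simp only [scaleXY, Complex.real_smul]
  push_cast
  ring

theorem polyT_scaleXY (s : ℝ) (f : TernaryForm d) (x y : ℂ) :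
    (f.scaleXY s).polyT x y = f.polyT (s * x) (s * y) :=
  Polynomial.funext fun t => by rw [eval_polyT, eval_polyT, eval_scaleXY]

/-- Nuij's path through hyperbolic forms: it ends at `f` for `s = 1`, is strictly hyperbolic for
`s ≠ 1`, and starts for `s = 0` at a form depending only on the leading coefficient of `f`. -/
noncomputable def nuijPath (f : TernaryForm d) (s : ℝ) : TernaryForm d :=
  tiltAverage (1 - s) 0 (tiltAverage 0 (1 - s) (f.scaleXY s))

theorem polyT_nuijPath (f : TernaryForm d) (s x y : ℝ) :
    (f.nuijPath s).polyT x y = imShiftAverage ((1 - s) * x)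
      (imShiftAverage ((1 - s) * y) (f.polyT (s * x : ℝ) (s * y : ℝ))) := by
  rw [nuijPath, polyT_tiltAverage, polyT_tiltAverage, polyT_scaleXY]
  simp

theorem eval_nuijPath (f : TernaryForm d) (s x y : ℝ) (t : ℂ) :
    (f.nuijPath s).eval t x y = (imShiftAverage ((1 - s) * x)
      (imShiftAverage ((1 - s) * y) (f.polyT (s * x : ℝ) (s * y : ℝ)))).eval t := by
  rw [← polyT_nuijPath, eval_polyT]

theorem eq_of_polyT_eq (h : ∀ x y : ℝ, f.polyT x y = g.polyT x y) : f = g := by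
  refine eq_of_eval_eq fun t x y => Complex.ofReal_injective ?_
  rw [ofReal_eval, ofReal_eval, ← eval_polyT, h, eval_polyT]

theorem nuijPath_one (f : TernaryForm d) : f.nuijPath 1 = f := by
  refine eq_of_polyT_eq fun x y => ?_
  rw [polyT_nuijPath]
  simp [imShiftAverage_zero]

theorem leadingCoeff_nuijPath (f : TernaryForm d) (s : ℝ) :
    (f.nuijPath s).eval (1 : ℝ) 0 0 = f.eval (1 : ℝ) 0 0 := by
  have h := f.eval_nuijPath s 0 0 1
  simp only [mul_zero, imShiftAverage_zero, eval_polyT] at h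
  exact Complex.ofReal_injective (by simpa only [ofReal_eval, Complex.ofReal_one] using h)

theorem nuijPath_zero_congr (h : f.eval (1 : ℝ) 0 0 = g.eval (1 : ℝ) 0 0) :
    f.nuijPath 0 = g.nuijPath 0 := by
  refine eq_of_polyT_eq fun x y => ?_
  have haxis : f.polyT 0 0 = g.polyT 0 0 :=
    Polynomial.funext fun t => by rw [eval_polyT, eval_polyT, f.eval_axis t, g.eval_axis t, h]
  rw [polyT_nuijPath, polyT_nuijPath, zero_mul, zero_mul, Complex.ofReal_zero, haxis]

theorem continuous_nuijPath (f : TernaryForm d) : Continuous f.nuijPath := by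
  refine continuous_of_continuous_eval fun t x y => ?_
  have hre : ∀ s, (f.nuijPath s).eval t x y = ((f.nuijPath s).eval (t : ℂ) x y).re := fun s => by
    rw [← ofReal_eval, Complex.ofReal_re]
  simp only [hre, eval_nuijPath, eval_imShiftAverage, eval_polyT]
  fun_prop

theorem IsHyperbolic.isStrictlyHyperbolic_nuijPath (hf : f.IsHyperbolic) {s : ℝ} (hs : s ≠ 1) :
    (f.nuijPath s).IsStrictlyHyperbolic := by
  have hs' : 1 - s ≠ 0 := sub_ne_zero.2 hs.symm
  refine ⟨hf.1.trans_eq (f.leadingCoeff_nuijPath s).symm, fun x y hxy t ht => ?_⟩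
  rw [eval_nuijPath] at ht
  rw [← eval_derivative_polyT, polyT_nuijPath]
  have hreal := hf.2 (s * x) (s * y)
  have hreal' := isRealRooted_imShiftAverage hreal ((1 - s) * y)
  refine ⟨isRealRooted_imShiftAverage hreal' _ t ht, ?_⟩
  rcases eq_or_ne x 0 with rfl | hx
  · rw [mul_zero (1 - s), imShiftAverage_zero] at ht ⊢
    exact eval_derivative_imShiftAverage_ne_zero hreal
      (mul_ne_zero hs' (hxy.resolve_left (by simp))) ht
  · exact eval_derivative_imShiftAverage_ne_zero hreal' (mul_ne_zero hs' hx) ht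

end TernaryForm

section Liouville

open Filter Topology

variable {V W : Type*} [NormedAddCommGroup V] [NormedSpace ℂ V] [FiniteDimensional ℂ V]
  [NormedAddCommGroup W] [NormedSpace ℂ W] {P Q : V →L[ℂ] W} {S : W} {G : ℂ → V}

theorem differentiable_of_pencil_apply_eq [FiniteDimensional ℂ W]
    (hinj : ∀ z : ℂ, Function.Injective (P + z • Q)) (hG : ∀ z : ℂ, (P + z • Q) (G z) = S) :
    Differentiable ℂ G := by
  intro z₀
  have : CompleteSpace V := FiniteDimensional.complete ℂ V
  obtain ⟨L, hL⟩ := LinearMap.exists_leftInverse_of_injective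
    ((P + z₀ • Q : V →L[ℂ] W) : V →ₗ[ℂ] W) (LinearMap.ker_eq_bot.2 (hinj z₀))
  let T : ℂ → V →L[ℂ] V := fun z => (LinearMap.toContinuousLinearMap L).comp (P + z • Q)
  have hT₀ : T z₀ = 1 := ContinuousLinearMap.ext fun g => LinearMap.congr_fun hL g
  have hT : DifferentiableAt ℂ T z₀ := by fun_prop
  have hinv : DifferentiableAt ℂ (fun z => Ring.inverse (T z)) z₀ :=
    DifferentiableAt.comp z₀ (g := Ring.inverse) (hT₀ ▸ differentiableAt_inverse isUnit_one) hT
  have hunit : ∀ᶠ z in 𝓝 z₀, IsUnit (T z) :=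
    hT.continuousAt (hT₀ ▸ Units.isOpen.mem_nhds isUnit_one)
  refine (hinv.clm_apply (differentiableAt_const (L S))).congr_of_eventuallyEq ?_
  filter_upwards [hunit] with z hz
  have hLS : L S = T z (G z) := by rw [← hG z]; rfl
  rw [hLS, ← mul_apply_eq_comp, Ring.inverse_mul_cancel _ hz]
  rfl

theorem tendsto_zero_of_pencil_apply_eq (hQ : Function.Injective Q)
    (hG : ∀ z : ℂ, (P + z • Q) (G z) = S) : Tendsto G (cocompact ℂ) (𝓝 0) := by
  obtain ⟨K, -, hK⟩ := LinearMap.exists_antilipschitzWith (Q : V →ₗ[ℂ] W)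
    (LinearMap.ker_eq_bot.2 hQ)
  have hbound (z : ℂ) : (‖z‖ - K * ‖P‖) * ‖G z‖ ≤ K * ‖S‖ := by
    have hQG : ‖z‖ * ‖Q (G z)‖ ≤ ‖S‖ + ‖P‖ * ‖G z‖ := by
      rw [← norm_smul, show z • Q (G z) = S - P (G z) by rw [← hG z]; simp]
      exact (norm_sub_le _ _).trans (by gcongr; exact P.le_opNorm _)
    have hGQ : ‖G z‖ ≤ K * ‖Q (G z)‖ := by simpa using hK.le_mul_dist (G z) 0
    nlinarith [mul_le_mul_of_nonneg_left hGQ (norm_nonneg z),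
      mul_le_mul_of_nonneg_left hQG K.coe_nonneg]
  have hlim : Tendsto (fun z : ℂ => K * ‖S‖ / (‖z‖ - K * ‖P‖)) (cocompact ℂ) (𝓝 0) :=
    tendsto_const_nhds.div_atTop
      (tendsto_atTop_add_const_right _ (-(K * ‖P‖)) (tendsto_norm_cocompact_atTop))
  refine squeeze_zero_norm' ?_ hlim
  filter_upwards [(tendsto_norm_cocompact_atTop (E := ℂ)).eventually
    (eventually_gt_atTop (K * ‖P‖))] with z hz
  rw [le_div_iff₀ (sub_pos.2 hz), mul_comm]
  exact hbound z

end Liouville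

-- The preimages of `S` form an entire function of `z` which vanishes at infinity.
theorem eq_zero_of_forall_mem_range_pencil {V W : Type*} [AddCommGroup V] [Module ℂ V]
    [FiniteDimensional ℂ V] [AddCommGroup W] [Module ℂ W] [FiniteDimensional ℂ W]
    {P Q : V →ₗ[ℂ] W} {S : W} (hinj : ∀ z : ℂ, Function.Injective (P + z • Q))
    (hQ : Function.Injective Q) (hS : ∀ z : ℂ, ∃ g, (P + z • Q) g = S) : S = 0 := by
  let eV := (Module.finBasis ℂ V).equivFun
  let eW := (Module.finBasis ℂ W).equivFun
  let conj (R : V →ₗ[ℂ] W) := LinearMap.toContinuousLinearMap (eV.arrowCongr eW R)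
  have hconj (z : ℂ) : ⇑(conj P + z • conj Q) = eW ∘ (P + z • Q) ∘ eV.symm := by
    ext1 v
    simp [conj]
  have hinj' (z : ℂ) : Function.Injective (conj P + z • conj Q) := by
    rw [hconj]
    exact eW.injective.comp ((hinj z).comp eV.symm.injective)
  have hQ' : Function.Injective (conj Q) := eW.injective.comp (hQ.comp eV.symm.injective)
  choose G hG using hS
  have hG' (z : ℂ) : (conj P + z • conj Q) (eV (G z)) = eW S := by
    rw [hconj, Function.comp_apply, Function.comp_apply, eV.symm_apply_apply, hG]
  have hzero := (differentiable_of_pencil_apply_eq hinj' hG').apply_eq_of_tendsto_cocompact 0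
    (tendsto_zero_of_pencil_apply_eq hQ' hG')
  rw [← hG 0, eV.map_eq_zero_iff.1 hzero, map_zero]

section Nonderogatory

open Matrix

variable {n K : Type*} [Fintype n] [Field K] {X : Matrix n n K}

/-- A square matrix is nonderogatory if its eigenspaces are at most one-dimensional. -/
def IsNonderogatory (X : Matrix n n K) : Prop :=
  ∀ (μ : K) (v w : n → K), X *ᵥ v = μ • v → X *ᵥ w = μ • w → v ≠ 0 → ∃ a : K, w = a • v

theorem exists_dotProduct_eigenvector_ne_zero [Infinite K] (hX : IsNonderogatory X) :
    ∃ v : n → K, ∀ (μ : K) (a : n → K), X *ᵥ a = μ • a → a ≠ 0 → a ⬝ᵥ v ≠ 0 := by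
  classical
  choose e he using fun μ : Module.End.Eigenvalues (Matrix.toLin' X) =>
    Module.End.HasEigenvalue.exists_hasEigenvector μ.2
  have hcover : ⋃ μ, (LinearMap.ker (dotProductEquiv K n (e μ)) : Set (n → K)) ≠ Set.univ := by
    intro h
    obtain ⟨μ, hμ⟩ := Subspace.exists_eq_top_of_iUnion_eq_univ h
    exact (he μ).2 ((dotProductEquiv K n).map_eq_zero_iff.1 (LinearMap.ker_eq_top.1 hμ))
  obtain ⟨v, hv⟩ := (Set.ne_univ_iff_exists_notMem _).1 hcover
  refine ⟨v, fun μ a ha ha0 hav => hv ?_⟩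
  have hμ : Module.End.HasEigenvalue (Matrix.toLin' X) μ :=
    Module.End.hasEigenvalue_of_hasEigenvector ⟨Module.End.mem_eigenspace_iff.2 ha, ha0⟩
  obtain ⟨c, hc⟩ := hX μ a (e ⟨μ, hμ⟩) ha (he ⟨μ, hμ⟩).apply_eq_smul ha0
  refine Set.mem_iUnion.2 ⟨⟨μ, hμ⟩, ?_⟩
  simp [hc, hav]

variable [IsAlgClosed K]

theorem eq_zero_of_forall_dotProduct_aeval_eq_zero [DecidableEq n] (hsymm : X.IsSymm) {v : n → K}
    (hv : ∀ (μ : K) (a : n → K), X *ᵥ a = μ • a → a ≠ 0 → a ⬝ᵥ v ≠ 0) {a : n → K}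
    (ha : ∀ q : Polynomial K, a ⬝ᵥ (Polynomial.aeval X q *ᵥ v) = 0) : a = 0 := by
  let U : Submodule K (n → K) :=
    { carrier := {a | ∀ q : Polynomial K, a ⬝ᵥ (Polynomial.aeval X q *ᵥ v) = 0}
      add_mem' := fun ha hb q => by rw [add_dotProduct, ha q, hb q, add_zero]
      zero_mem' := fun q => zero_dotProduct _
      smul_mem' := fun r a ha q => by rw [smul_dotProduct, ha q, smul_zero] }
  have hinvariant : ∀ a ∈ U, Matrix.toLin' X a ∈ U := fun a ha q => by
    have h := ha (Polynomial.X * q)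
    rwa [map_mul, Polynomial.aeval_X, ← Matrix.mulVec_mulVec, Matrix.dotProduct_mulVec,
      ← Matrix.mulVec_transpose, hsymm] at h
  by_contra ha0
  have : Nontrivial U := ⟨⟨a, ha⟩, 0, fun h => ha0 (congrArg Subtype.val h)⟩
  obtain ⟨μ, hμ⟩ := Module.End.exists_eigenvalue ((Matrix.toLin' X).restrict hinvariant)
  obtain ⟨b, hb⟩ := hμ.exists_hasEigenvector
  refine hv μ b (congrArg Subtype.val hb.apply_eq_smul) (fun h => hb.2 (Subtype.ext h)) ?_
  simpa using b.2 1

theorem exists_cyclic_vector [DecidableEq n] (hX : IsNonderogatory X) (hsymm : X.IsSymm) :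
    ∃ v : n → K, ∀ w, ∃ q : Polynomial K, Polynomial.aeval X q *ᵥ v = w := by
  obtain ⟨v, hv⟩ := exists_dotProduct_eigenvector_ne_zero hX
  let ψ : Polynomial K →ₗ[K] n → K :=
    (Matrix.mulVecBilin K K).flip v ∘ₗ (Polynomial.aeval X).toLinearMap
  refine ⟨v, (LinearMap.range_eq_top (f := ψ)).1 (by_contra fun hψ => ?_)⟩
  obtain ⟨φ, hφ0, hφ⟩ := Submodule.exists_le_ker_of_lt_top _ (lt_top_iff_ne_top.2 hψ)
  obtain ⟨a, rfl⟩ := (dotProductEquiv K n).surjective φ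
  have ha : a = 0 := eq_zero_of_forall_dotProduct_aeval_eq_zero hsymm hv
    fun q => hφ (LinearMap.mem_range_self ψ q)
  exact hφ0 (by rw [ha, map_zero])

theorem exists_aeval_eq_of_commute [DecidableEq n] (hX : IsNonderogatory X) (hsymm : X.IsSymm)
    {Z : Matrix n n K} (hZ : Commute X Z) : ∃ q : Polynomial K, Polynomial.aeval X q = Z := by
  obtain ⟨v, hv⟩ := exists_cyclic_vector hX hsymm
  obtain ⟨q, hq⟩ := hv (Z *ᵥ v)
  refine ⟨q, Matrix.ext_of_mulVec_single fun i => ?_⟩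
  obtain ⟨r, hr⟩ := hv (Pi.single i 1)
  have hcomm : Commute Z (Polynomial.aeval X r) :=
    (Algebra.commute_of_mem_adjoin_singleton_of_commute
      (Polynomial.aeval_mem_adjoin_singleton K X) hZ.symm)
  rw [← hr, Matrix.mulVec_mulVec _ Z, hcomm, ← Matrix.mulVec_mulVec, ← hq, Matrix.mulVec_mulVec,
    Matrix.mulVec_mulVec, ← map_mul, ← map_mul, mul_comm]

theorem eq_zero_of_commute_of_transpose_eq_neg [CharZero K] (hX : IsNonderogatory X)
    (hsymm : X.IsSymm) {Z : Matrix n n K} (hZ : Commute X Z) (hskew : Zᵀ = -Z) : Z = 0 := by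
  classical
  obtain ⟨q, rfl⟩ := exists_aeval_eq_of_commute hX hsymm hZ
  have hT : (Polynomial.aeval X q)ᵀ = Polynomial.aeval X q := by
    simp only [Polynomial.aeval_eq_sum_range, Matrix.transpose_sum, Matrix.transpose_smul,
      Matrix.transpose_pow, hsymm.eq]
  have hself := hT.symm.trans hskew
  ext i j
  exact self_eq_neg.1 (congrFun (congrFun hself i) j)

end Nonderogatory

section Commutator

open Matrix

variable {n K : Type*} [Fintype n] [Field K] {X S : Matrix n n K}

theorem exists_eq_trace_mul (φ : Module.Dual K (Matrix n n K)) :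
    ∃ Z : Matrix n n K, ∀ G, φ G = (Z * G).trace := by
  classical
  refine ⟨Matrix.of fun i j => φ (Matrix.single j i 1), fun G => ?_⟩
  suffices φ = Matrix.traceLinearMap n K K ∘ₗ
      LinearMap.mulLeft K (Matrix.of fun i j => φ (Matrix.single j i 1)) from
    LinearMap.congr_fun this G
  refine Matrix.ext_linearMap K fun i j => LinearMap.ext_ring ?_
  simp [Matrix.trace_mul_single]

theorem exists_commutator_eq (h : ∀ Z, Commute X Z → (Z * S).trace = 0) :
    ∃ G, X * G - G * X = S := by
  by_contra hS
  have hS' : S ∉ LinearMap.range (LinearMap.mulLeft K X - LinearMap.mulRight K X) :=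
    fun ⟨G, hG⟩ => hS ⟨G, hG⟩
  obtain ⟨φ, hφS, hφ⟩ := Submodule.exists_le_ker_of_notMem hS'
  obtain ⟨Z, hZ⟩ := exists_eq_trace_mul φ
  refine hφS ((hZ S).trans (h Z (Matrix.ext_iff_trace_mul_right.2 fun G => ?_)))
  have hG : φ (X * G - G * X) = 0 := hφ ⟨G, rfl⟩
  rw [hZ, mul_sub, Matrix.trace_sub, sub_eq_zero] at hG
  rw [mul_assoc, Matrix.trace_mul_comm, mul_assoc, ← hG, mul_assoc]

theorem exists_skew_commutator_eq [CharZero K] (hX : X.IsSymm) (hS : S.IsSymm)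
    (h : ∃ G, X * G - G * X = S) : ∃ G, Gᵀ = -G ∧ X * G - G * X = S := by
  obtain ⟨G, hG⟩ := h
  have hGT : Gᵀ * X - X * Gᵀ = S := by
    simpa only [Matrix.transpose_sub, Matrix.transpose_mul, hX.eq, hS.eq]
      using congrArg Matrix.transpose hG
  refine ⟨(2⁻¹ : K) • (G - Gᵀ), by simp [← smul_neg], ?_⟩
  calc X * (2⁻¹ : K) • (G - Gᵀ) - (2⁻¹ : K) • (G - Gᵀ) * X
      = (2⁻¹ : K) • ((X * G - G * X) + (Gᵀ * X - X * Gᵀ)) := by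
        rw [Matrix.mul_smul, Matrix.smul_mul, ← smul_sub]
        congr 1
        noncomm_ring
    _ = S := by rw [hG, hGT, ← two_smul K, inv_smul_smul₀ two_ne_zero]

end Commutator

section SymmetricPencil

open Matrix

variable {n : Type*} [Fintype n] [DecidableEq n]

theorem trace_mul_pow_eq_zero {X S : Matrix n n ℂ}
    (h : ∀ s : ℂ, (S * adjugate (1 + s • X)).trace = 0) (k : ℕ) : (S * X ^ k).trace = 0 := by
  suffices ∀ s : ℂ, (S * X ^ k * adjugate (1 + s • X)).trace = 0 by simpa using this 0
  induction k with
  | zero => simpa using h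
  | succ k ih =>
    have hne : ∀ s ∈ ({0}ᶜ : Set ℂ), (S * X ^ (k + 1) * adjugate (1 + s • X)).trace = 0 := by
      intro s hs
      have hadj : s • (X * adjugate (1 + s • X)) =
          (1 + s • X).det • (1 : Matrix n n ℂ) - adjugate (1 + s • X) := by
        rw [← Matrix.mul_adjugate, add_mul, one_mul, Matrix.smul_mul, add_sub_cancel_left]
      have htr : (S * X ^ k).trace = 0 := by simpa using ih 0
      refine (smul_eq_zero.1 ?_).resolve_left hs
      rw [← Matrix.trace_smul, pow_succ, ← mul_assoc, mul_assoc (S * X ^ k), ← Matrix.mul_smul,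
        hadj, mul_sub, Matrix.trace_sub, ih, Matrix.mul_smul, mul_one, Matrix.trace_smul, htr,
        smul_zero, sub_zero]
    exact congrFun (Continuous.ext_on (dense_compl_singleton 0) (by fun_prop) continuous_const hne)

theorem exists_skew_commutator_eq_of_trace_mul_pow_eq_zero {X S : Matrix n n ℂ}
    (hX : IsNonderogatory X) (hsymm : X.IsSymm) (hS : S.IsSymm)
    (h : ∀ k : ℕ, (S * X ^ k).trace = 0) : ∃ G, Gᵀ = -G ∧ X * G - G * X = S := by
  refine exists_skew_commutator_eq hsymm hS (exists_commutator_eq fun Z hZ => ?_)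
  obtain ⟨q, rfl⟩ := exists_aeval_eq_of_commute hX hsymm hZ
  simp only [Matrix.trace_mul_comm _ S, Polynomial.aeval_eq_sum_range, Finset.mul_sum,
    Matrix.trace_sum, Matrix.mul_smul, Matrix.trace_smul, h, smul_zero, Finset.sum_const_zero]

theorem eq_zero_of_trace_mul_adjugate_pencil_eq_zero {A B S : Matrix n n ℂ}
    (hA : A.IsSymm) (hB : B.IsSymm) (hS : S.IsSymm)
    (hN : ∀ x y : ℂ, x ≠ 0 ∨ y ≠ 0 → IsNonderogatory (x • A + y • B))
    (h : ∀ t x y : ℂ, (S * adjugate (t • 1 + x • A + y • B)).trace = 0) : S = 0 := by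
  let skew : Submodule ℂ (Matrix n n ℂ) := skewAdjointMatricesSubmodule 1
  have hskew (G : Matrix n n ℂ) : G ∈ skew ↔ Gᵀ = -G := by
    simp [skew, Matrix.IsSkewAdjoint, Matrix.IsAdjointPair]
  let ad (X : Matrix n n ℂ) : skew →ₗ[ℂ] Matrix n n ℂ :=
    (LinearMap.mulLeft ℂ X - LinearMap.mulRight ℂ X) ∘ₗ skew.subtype
  have had (X : Matrix n n ℂ) (G : skew) : ad X G = X * G - G * X := rfl
  have hsymm (x y : ℂ) : (x • A + y • B).IsSymm := (hA.smul x).add (hB.smul y)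
  have hinj {x y : ℂ} (hxy : x ≠ 0 ∨ y ≠ 0) : Function.Injective (ad (x • A + y • B)) :=
    (injective_iff_map_eq_zero _).2 fun G hG => Subtype.ext <|
      eq_zero_of_commute_of_transpose_eq_neg (hN x y hxy) (hsymm x y) (sub_eq_zero.1 hG)
        ((hskew G).1 G.2)
  have hpencil (z : ℂ) : ad A + z • ad B = ad ((1 : ℂ) • A + z • B) := by
    ext1 G
    simp only [LinearMap.add_apply, LinearMap.smul_apply, had, one_smul, add_mul, mul_add,
      Matrix.smul_mul, Matrix.mul_smul, smul_sub]
    abel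
  refine eq_zero_of_forall_mem_range_pencil (P := ad A) (Q := ad B)
    (fun z => hpencil z ▸ hinj (Or.inl one_ne_zero))
    (by simpa using hinj (x := 0) (y := 1) (Or.inr one_ne_zero)) fun z => ?_
  obtain ⟨G, hG, hGS⟩ := exists_skew_commutator_eq_of_trace_mul_pow_eq_zero
    (hN 1 z (Or.inl one_ne_zero)) (hsymm 1 z) hS
    (trace_mul_pow_eq_zero fun s => by simpa [mul_smul, add_assoc] using h 1 s (s * z))
  exact ⟨⟨G, (hskew G).2 hG⟩, by rw [hpencil, had, hGS]⟩

end SymmetricPencil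

section Jacobi

open Matrix

variable {n 𝕜 : Type*} [Fintype n] [DecidableEq n] [RCLike 𝕜]

/-- The determinant as a continuous multilinear function of the rows. -/
noncomputable def detContinuousMultilinear (n 𝕜 : Type*) [Fintype n] [DecidableEq n] [RCLike 𝕜] :
    ContinuousMultilinearMap 𝕜 (fun _ : n => n → 𝕜) 𝕜 where
  toMultilinearMap := (Matrix.detRowAlternating (R := 𝕜) (n := n)).toMultilinearMap
  cont := (continuous_id (X := Matrix n n 𝕜)).matrix_det

theorem linearDeriv_detContinuousMultilinear (M N : Matrix n n 𝕜) :
    (detContinuousMultilinear n 𝕜).linearDeriv M.row N.row = (adjugate M * N).trace := by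
  rw [ContinuousMultilinearMap.linearDeriv_apply, Matrix.trace_mul_comm]
  refine Finset.sum_congr rfl fun i _ => ?_
  change (M.updateRow i (N i)).det = _
  rw [← Matrix.cramer_transpose_apply, Matrix.cramer_eq_adjugate_mulVec,
    ← Matrix.adjugate_transpose]
  simp [Matrix.mulVec, dotProduct, Matrix.mul_apply, mul_comm]

theorem hasDerivAt_det_add_smul (M N : Matrix n n 𝕜) :
    HasDerivAt (fun ε : 𝕜 => (M + ε • N).det) (adjugate M * N).trace 0 := by
  have h := ((detContinuousMultilinear n 𝕜).hasFDerivAt (x := M.row)).hasLineDerivAt N.row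
  rw [linearDeriv_detContinuousMultilinear] at h
  exact h

end Jacobi

theorem isHomogeneous_det {n σ R : Type*} [Fintype n] [DecidableEq n] [CommRing R]
    {M : Matrix n n (MvPolynomial σ R)} (h : ∀ i j, (M i j).IsHomogeneous 1) :
    M.det.IsHomogeneous (Fintype.card n) := by
  rw [Matrix.det_apply]
  refine MvPolynomial.IsHomogeneous.sum _ _ _ fun σ _ => ?_
  have hprod := MvPolynomial.IsHomogeneous.prod Finset.univ (fun i => M (σ i) i) (fun _ => 1)
    fun i _ => h _ _
  simp only [Finset.sum_const, Finset.card_univ, smul_eq_mul, mul_one] at hprod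
  rcases Int.units_eq_one_or (Equiv.Perm.sign σ) with hσ | hσ <;> rw [hσ]
  · simpa using hprod
  · simpa using hprod.neg

section Pencil

variable {n K L : Type*} [DecidableEq n] [CommRing K] [Algebra ℝ K] [CommRing L]
  [Algebra ℝ L]

/-- The matrix pencil `t I + x A + y B` of two real matrices at a point with coordinates in a real
algebra. -/
def pencil (A B : Matrix n n ℝ) (t x y : K) : Matrix n n K :=
  t • 1 + x • A.map (algebraMap ℝ K) + y • B.map (algebraMap ℝ K)

theorem mapMatrix_pencil [Fintype n] (φ : K →ₐ[ℝ] L) (A B : Matrix n n ℝ) (t x y : K) :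
    φ.mapMatrix (pencil A B t x y) = pencil A B (φ t) (φ x) (φ y) := by
  ext i j
  simp [pencil, Matrix.one_apply, apply_ite φ]

/-- The generic matrix of the pencil, with linear forms as entries. -/
noncomputable def genericPencil (A B : Matrix n n ℝ) : Matrix n n (MvPolynomial (Fin 3) ℝ) :=
  pencil A B (MvPolynomial.X 0) (MvPolynomial.X 1) (MvPolynomial.X 2)

theorem mapMatrix_aeval_genericPencil [Fintype n] (A B : Matrix n n ℝ) (t x y : K) :
    (MvPolynomial.aeval (R := ℝ) ![t, x, y]).mapMatrix (genericPencil A B) = pencil A B t x y := by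
  rw [genericPencil, mapMatrix_pencil]
  simp

theorem isHomogeneous_genericPencil_apply (A B : Matrix n n ℝ) (i j : n) :
    (genericPencil A B i j).IsHomogeneous 1 := by
  have hentry (k : Fin 3) (r : ℝ) :
      (MvPolynomial.X k * MvPolynomial.C r : MvPolynomial (Fin 3) ℝ).IsHomogeneous 1 := by
    rw [mul_comm]
    exact MvPolynomial.isHomogeneous_C_mul_X r k
  have hone : (1 : Matrix n n (MvPolynomial (Fin 3) ℝ)) i j =
      MvPolynomial.C ((1 : Matrix n n ℝ) i j) := by
    simp [Matrix.one_apply, apply_ite MvPolynomial.C]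
  simp only [genericPencil, pencil, Matrix.add_apply, Matrix.smul_apply, Matrix.map_apply,
    smul_eq_mul, MvPolynomial.algebraMap_eq, hone]
  exact ((hentry 0 _).add (hentry 1 _)).add (hentry 2 _)

end Pencil

section SymmetricOfSym2

variable {n : Type*}

/-- The symmetric matrix with given entries, as a linear parametrization of the space of real
symmetric matrices. -/
def symmetricOfSym2 (n : Type*) : (Sym2 n → ℝ) →ₗ[ℝ] Matrix n n ℝ where
  toFun φ := Matrix.of fun i j => φ s(i, j)
  map_add' _ _ := rfl
  map_smul' _ _ := rfl

theorem symmetricOfSym2_apply (φ : Sym2 n → ℝ) (i j : n) : symmetricOfSym2 n φ i j = φ s(i, j) :=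
  rfl

theorem isSymm_symmetricOfSym2 (φ : Sym2 n → ℝ) : (symmetricOfSym2 n φ).IsSymm :=
  Matrix.IsSymm.ext fun _ _ => congrArg φ Sym2.eq_swap

theorem exists_symmetricOfSym2_eq {S : Matrix n n ℝ} (hS : S.IsSymm) :
    ∃ φ, symmetricOfSym2 n φ = S :=
  ⟨Sym2.lift ⟨S, fun i j => hS.apply j i⟩, rfl⟩

theorem symmetricOfSym2_injective : Function.Injective (symmetricOfSym2 n) := by
  intro φ ψ h
  funext z
  induction z using Sym2.ind with
  | _ i j => exact congrFun (congrFun h i) j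

end SymmetricOfSym2

namespace TernaryForm

open Matrix

variable {d n : ℕ} {K : Type*} [CommRing K] [Algebra ℝ K]

/-- The form `a det(t I + x A + y B)`. -/
noncomputable def detForm (a : ℝ) (A B : Matrix (Fin d) (Fin d) ℝ) : TernaryForm d :=
  ofMvPolynomial d (MvPolynomial.C a * (genericPencil A B).det)

theorem eval_detForm (a : ℝ) (A B : Matrix (Fin d) (Fin d) ℝ) (t x y : K) :
    (detForm a A B).eval t x y = a • (pencil A B t x y).det := by
  have hhom := isHomogeneous_det (isHomogeneous_genericPencil_apply A B)
  rw [Fintype.card_fin] at hhom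
  rw [detForm, eval_ofMvPolynomial (hhom.C_mul a), map_mul, AlgHom.map_det,
    mapMatrix_aeval_genericPencil, MvPolynomial.aeval_C, Algebra.smul_def]

theorem eval_detForm_real (a : ℝ) (A B : Matrix (Fin d) (Fin d) ℝ) (t x y : ℝ) :
    (detForm a A B).eval t x y = a * (t • 1 + x • A + y • B).det :=
  eval_detForm a A B t x y

/-- The form `tr(S adj(t I + x A + y B))`, of degree one less than the size of the matrices. -/
noncomputable def adjForm (A B S : Matrix (Fin (n + 1)) (Fin (n + 1)) ℝ) : TernaryForm n :=
  ofMvPolynomial n (S.map MvPolynomial.C * adjugate (genericPencil A B)).trace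

theorem isHomogeneous_trace_mul_adjugate (A B S : Matrix (Fin (n + 1)) (Fin (n + 1)) ℝ) :
    (S.map MvPolynomial.C * adjugate (genericPencil A B)).trace.IsHomogeneous n := by
  change (∑ i, ∑ j, MvPolynomial.C (S i j) * adjugate (genericPencil A B) j i).IsHomogeneous n
  refine MvPolynomial.IsHomogeneous.sum _ _ _ fun i _ => ?_
  refine MvPolynomial.IsHomogeneous.sum _ _ _ fun j _ => ?_
  refine MvPolynomial.IsHomogeneous.C_mul ?_ (S i j)
  rw [Matrix.adjugate_fin_succ_eq_det_submatrix]
  have hminor := isHomogeneous_det (M := (genericPencil A B).submatrix i.succAbove j.succAbove)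
    fun _ _ => isHomogeneous_genericPencil_apply A B _ _
  simpa using hminor.C_mul ((-1) ^ (i + j : ℕ))

theorem eval_adjForm (A B S : Matrix (Fin (n + 1)) (Fin (n + 1)) ℝ) (t x y : K) :
    (adjForm A B S).eval t x y =
      (S.map (algebraMap ℝ K) * adjugate (pencil A B t x y)).trace := by
  have hS : (MvPolynomial.aeval ![t, x, y]).mapMatrix (S.map MvPolynomial.C) =
      S.map (algebraMap ℝ K) := by
    ext i j
    simp
  rw [adjForm, eval_ofMvPolynomial (isHomogeneous_trace_mul_adjugate A B S),
    AddMonoidHom.map_trace, ← AlgHom.mapMatrix_apply, map_mul, hS, AlgHom.map_adjugate,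
    mapMatrix_aeval_genericPencil]

theorem eval_adjForm_real (A B S : Matrix (Fin (n + 1)) (Fin (n + 1)) ℝ) (t x y : ℝ) :
    (adjForm A B S).eval t x y = (S * adjugate (t • 1 + x • A + y • B)).trace :=
  eval_adjForm A B S t x y

theorem adjForm_surjective {A B : Matrix (Fin (n + 1)) (Fin (n + 1)) ℝ} (hA : A.IsSymm)
    (hB : B.IsSymm) (hN : ∀ x y : ℂ, x ≠ 0 ∨ y ≠ 0 →
      IsNonderogatory (x • A.map (algebraMap ℝ ℂ) + y • B.map (algebraMap ℝ ℂ)))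
    (g : TernaryForm n) : ∃ S : Matrix (Fin (n + 1)) (Fin (n + 1)) ℝ, S.IsSymm ∧
      adjForm A B S = g := by
  let L : (Sym2 (Fin (n + 1)) → ℝ) →ₗ[ℝ] TernaryForm n :=
    { toFun φ := adjForm A B (symmetricOfSym2 _ φ)
      map_add' φ ψ := eq_of_eval_eq fun t x y => by
        simp [eval_adjForm, eval_add, add_mul]
      map_smul' r φ := eq_of_eval_eq fun t x y => by
        simp [eval_adjForm, eval_smul] }
  have hinj : Function.Injective L := by
    refine (injective_iff_map_eq_zero L).2 fun φ hφ => symmetricOfSym2_injective ?_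
    have hS := eq_zero_of_trace_mul_adjugate_pencil_eq_zero (hA.map _) (hB.map _)
      ((isSymm_symmetricOfSym2 φ).map (algebraMap ℝ ℂ)) hN fun t x y => by
        refine (eval_adjForm A B (symmetricOfSym2 _ φ) t x y).symm.trans ?_
        rw [show adjForm A B (symmetricOfSym2 _ φ) = 0 from hφ]
        simp [eval]
    rw [map_zero]
    exact Matrix.map_injective (algebraMap ℝ ℂ).injective (by simpa using hS)
  have hsurj : Function.Surjective L := by
    refine (LinearMap.injective_iff_surjective_of_finrank_eq_finrank ?_).1 hinj
    rw [Module.finrank_pi, Module.finrank_pi, TernaryExponent.card_eq, Sym2.card, Fintype.card_fin]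
  obtain ⟨φ, hφ⟩ := hsurj g
  exact ⟨symmetricOfSym2 _ φ, isSymm_symmetricOfSym2 φ, hφ⟩

theorem exists_eval_eq_monomial {i j k : ℕ} (h : i + j + k = d) :
    ∃ g : TernaryForm d, ∀ t x y : K, g.eval t x y = t ^ i * x ^ j * y ^ k := by
  have hhom := ((MvPolynomial.isHomogeneous_X_pow (R := ℝ) (0 : Fin 3) i).mul
    (MvPolynomial.isHomogeneous_X_pow 1 j)).mul (MvPolynomial.isHomogeneous_X_pow 2 k)
  rw [h] at hhom
  refine ⟨ofMvPolynomial d _, fun t x y => (eval_ofMvPolynomial hhom t x y).trans ?_⟩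
  simp

theorem exists_monomial_eq_add_x_mul_add_y_mul (m : TernaryExponent (n + 1)) :
    ∃ g h : TernaryForm n, ∀ t x y : K, t ^ m.1 0 * x ^ m.1 1 * y ^ m.1 2 =
      0 ^ m.1 1 * 0 ^ m.1 2 * t ^ (n + 1) + x * g.eval t x y + y * h.eval t x y := by
  have hm := m.sum_eq
  have hzero (t x y : K) : (0 : TernaryForm n).eval t x y = 0 := by simp [eval]
  rcases Nat.eq_zero_or_eq_succ_pred (m.1 1) with hx | hx
  · rcases Nat.eq_zero_or_eq_succ_pred (m.1 2) with hy | hy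
    · refine ⟨0, 0, fun t x y => ?_⟩
      simp [hzero, hx, hy, show m.1 0 = n + 1 by lia]
    · obtain ⟨h, hh⟩ := exists_eval_eq_monomial (K := K)
        (show m.1 0 + m.1 1 + (m.1 2).pred = n by lia)
      refine ⟨0, h, fun t x y => ?_⟩
      rw [hh, hzero, hy, Nat.pred_succ, pow_succ, pow_succ]
      ring
  · obtain ⟨g, hg⟩ := exists_eval_eq_monomial (K := K)
      (show m.1 0 + (m.1 1).pred + m.1 2 = n by lia)
    refine ⟨g, 0, fun t x y => ?_⟩
    rw [hg, hzero, hx, Nat.pred_succ, pow_succ, pow_succ]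
    ring

theorem exists_eval_eq_add_x_mul_add_y_mul (f : TernaryForm (n + 1)) :
    ∃ g h : TernaryForm n, ∀ t x y : ℝ, f.eval t x y =
      f.eval 1 0 0 * t ^ (n + 1) + x * g.eval t x y + y * h.eval t x y := by
  choose g h hgh using exists_monomial_eq_add_x_mul_add_y_mul (K := ℝ) (n := n)
  refine ⟨∑ m, f m • g m, ∑ m, f m • h m, fun t x y => ?_⟩
  have hsum (k : TernaryExponent (n + 1) → TernaryForm n) :
      (∑ m, f m • k m).eval t x y = ∑ m, f m • (k m).eval t x y :=
    (map_sum (evalLinear n (t, x, y)) (fun m => f m • k m) Finset.univ).trans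
      (Finset.sum_congr rfl fun m _ => eval_smul (f m) (k m) t x y)
  rw [hsum, hsum, eval, eval, Finset.sum_mul, Finset.mul_sum, Finset.mul_sum,
    ← Finset.sum_add_distrib, ← Finset.sum_add_distrib]
  refine Finset.sum_congr rfl fun m _ => ?_
  rw [hgh]
  simp only [smul_eq_mul, one_pow]
  ring

/-- Forms with a symmetric determinantal representation. -/
def IsDeterminantal (f : TernaryForm d) : Prop :=
  ∃ (a : ℝ) (A B : Matrix (Fin d) (Fin d) ℝ), A.IsSymm ∧ B.IsSymm ∧ f = detForm a A B

/-- The determinantal form of two symmetric matrices and a scalar, as a map between vector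
spaces. -/
noncomputable def symmDetForm (p : ℝ × (Sym2 (Fin d) → ℝ) × (Sym2 (Fin d) → ℝ)) :
    TernaryForm d :=
  detForm p.1 (symmetricOfSym2 _ p.2.1) (symmetricOfSym2 _ p.2.2)

theorem eval_symmDetForm (p : ℝ × (Sym2 (Fin d) → ℝ) × (Sym2 (Fin d) → ℝ)) (t x y : ℝ) :
    (symmDetForm p).eval t x y =
      p.1 * (t • 1 + x • symmetricOfSym2 _ p.2.1 + y • symmetricOfSym2 _ p.2.2).det :=
  eval_detForm_real _ _ _ _ _ _

theorem contDiff_symmDetForm : ContDiff ℝ 1 (symmDetForm (d := d)) := by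
  refine contDiff_of_contDiff_eval fun t x y => ?_
  simp only [eval_symmDetForm, Matrix.det_apply, Matrix.add_apply, Matrix.smul_apply,
    symmetricOfSym2_apply]
  fun_prop

theorem eval_fderiv_symmDetForm (p v : ℝ × (Sym2 (Fin d) → ℝ) × (Sym2 (Fin d) → ℝ))
    (t x y : ℝ) :
    (fderiv ℝ symmDetForm p v).eval t x y =
      v.1 * (t • 1 + x • symmetricOfSym2 _ p.2.1 + y • symmetricOfSym2 _ p.2.2).det +
        p.1 * (adjugate (t • 1 + x • symmetricOfSym2 _ p.2.1 + y • symmetricOfSym2 _ p.2.2) *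
          (x • symmetricOfSym2 _ v.2.1 + y • symmetricOfSym2 _ v.2.2)).trace := by
  set M := t • 1 + x • symmetricOfSym2 _ p.2.1 + y • symmetricOfSym2 _ p.2.2 with hM
  set N := x • symmetricOfSym2 _ v.2.1 + y • symmetricOfSym2 _ v.2.2 with hN
  have hG : HasFDerivAt symmDetForm (fderiv ℝ symmDetForm p) p :=
    (contDiff_symmDetForm.differentiable one_ne_zero p).hasFDerivAt
  have hline := ((LinearMap.toContinuousLinearMap (evalLinear d (t, x, y))).hasFDerivAt.comp p
    hG).hasLineDerivAt v
  have hscalar : HasDerivAt (fun ε : ℝ => p.1 + ε * v.1) v.1 0 := by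
    simpa using ((hasDerivAt_id (0 : ℝ)).mul_const v.1).const_add p.1
  have hprod := hscalar.mul (hasDerivAt_det_add_smul M N)
  have hfun : (fun ε : ℝ => (symmDetForm (p + ε • v)).eval t x y) =
      fun ε => (p.1 + ε * v.1) * (M + ε • N).det := by
    funext ε
    rw [eval_symmDetForm, hM, hN]
    simp only [Prod.fst_add, Prod.snd_add, Prod.smul_fst, Prod.smul_snd, map_add, map_smul,
      smul_eq_mul]
    congr 2
    module
  simp only [zero_mul, zero_smul, add_zero] at hprod
  exact HasDerivAt.unique (f := fun ε : ℝ => (symmDetForm (p + ε • v)).eval t x y) hline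
    (hfun ▸ hprod)

theorem range_fderiv_symmDetForm {p : ℝ × (Sym2 (Fin (n + 1)) → ℝ) × (Sym2 (Fin (n + 1)) → ℝ)}
    (hp : p.1 ≠ 0) (hN : ∀ x y : ℂ, x ≠ 0 ∨ y ≠ 0 →
      IsNonderogatory (x • (symmetricOfSym2 _ p.2.1).map (algebraMap ℝ ℂ) +
        y • (symmetricOfSym2 _ p.2.2).map (algebraMap ℝ ℂ))) :
    (fderiv ℝ symmDetForm p).range = ⊤ := by
  refine LinearMap.range_eq_top.2 fun f => ?_
  obtain ⟨a, χ, ω⟩ := p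
  dsimp only at hp hN
  have hAs := isSymm_symmetricOfSym2 χ
  have hBs := isSymm_symmetricOfSym2 ω
  set A := symmetricOfSym2 _ χ with hA
  set B := symmetricOfSym2 _ ω with hB
  obtain ⟨g, h, hgh⟩ :=
    exists_eval_eq_add_x_mul_add_y_mul (f + (-f.eval (1 : ℝ) 0 0) • detForm 1 A B)
  simp only [eval_add f, eval_smul, eval_detForm_real, smul_eq_mul, one_smul, zero_smul, add_zero,
    Matrix.det_one, one_mul, mul_one, add_neg_cancel, zero_mul, zero_add] at hgh
  obtain ⟨S, hS, hSg⟩ := adjForm_surjective hAs hBs hN (a⁻¹ • g)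
  obtain ⟨T, hT, hTh⟩ := adjForm_surjective hAs hBs hN (a⁻¹ • h)
  obtain ⟨φ, rfl⟩ := exists_symmetricOfSym2_eq hS
  obtain ⟨ψ, rfl⟩ := exists_symmetricOfSym2_eq hT
  refine ⟨(f.eval (1 : ℝ) 0 0, φ, ψ), eq_of_eval_eq fun t x y => ?_⟩
  have hg := congrArg (eval · t x y) hSg
  have hh := congrArg (eval · t x y) hTh
  simp only [eval_adjForm_real, eval_smul, smul_eq_mul] at hg hh
  refine (eval_fderiv_symmDetForm _ _ t x y).trans ?_
  simp only [← hA, ← hB, mul_add, Matrix.mul_smul, Matrix.trace_add, Matrix.trace_smul,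
    smul_eq_mul, Matrix.trace_mul_comm (adjugate _), hg, hh]
  field_simp
  linear_combination -hgh t x y

theorem setOf_isDeterminantal_mem_nhds {a : ℝ} {A B : Matrix (Fin (n + 1)) (Fin (n + 1)) ℝ}
    (ha : a ≠ 0) (hA : A.IsSymm) (hB : B.IsSymm) (hN : ∀ x y : ℂ, x ≠ 0 ∨ y ≠ 0 →
      IsNonderogatory (x • A.map (algebraMap ℝ ℂ) + y • B.map (algebraMap ℝ ℂ))) :
    {f : TernaryForm (n + 1) | f.IsDeterminantal} ∈ nhds (detForm a A B) := by
  obtain ⟨φ, rfl⟩ := exists_symmetricOfSym2_eq hA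
  obtain ⟨ψ, rfl⟩ := exists_symmetricOfSym2_eq hB
  have hstrict := (contDiff_symmDetForm (d := n + 1)).contDiffAt (x := (a, φ, ψ))
    |>.hasStrictFDerivAt one_ne_zero
  have hmap := hstrict.map_nhds_eq_of_surj (range_fderiv_symmDetForm ha hN)
  change _ ∈ nhds (symmDetForm (a, φ, ψ))
  rw [← hmap, Filter.mem_map]
  exact Filter.univ_mem' fun p =>
    ⟨p.1, _, _, isSymm_symmetricOfSym2 p.2.1, isSymm_symmetricOfSym2 p.2.2, rfl⟩

end TernaryForm

section Adjugate

variable {n K : Type*} [Fintype n] [DecidableEq n] [Field K]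

theorem exists_eq_smul_of_mulVec_eq_zero {M : Matrix n n K} (hM : M.adjugate ≠ 0) {v w : n → K}
    (hv : M.mulVec v = 0) (hw : M.mulVec w = 0) (hv0 : v ≠ 0) : ∃ a : K, w = a • v := by
  obtain ⟨i, j, hij⟩ : ∃ i j, M.adjugate i j ≠ 0 := by
    by_contra! h
    exact hM (Matrix.ext h)
  rw [Matrix.adjugate_apply] at hij
  have eq_zero_of_coord : ∀ u : n → K, M.mulVec u = 0 → u i = 0 → u = 0 := by
    intro u hu hui
    refine Matrix.eq_zero_of_mulVec_eq_zero hij (funext fun k => ?_)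
    rcases eq_or_ne k j with rfl | hk
    · simp [Matrix.mulVec, hui]
    · simpa [Matrix.mulVec, Matrix.updateRow_ne hk] using congrFun hu k
  have hvi : v i ≠ 0 := fun h => hv0 (eq_zero_of_coord v hv h)
  refine ⟨w i / v i, sub_eq_zero.1 (eq_zero_of_coord _ ?_ ?_)⟩
  · rw [Matrix.mulVec_sub, Matrix.mulVec_smul, hv, hw, smul_zero, sub_zero]
  · simp [hvi]

theorem isNonderogatory_of_adjugate_ne_zero {X : Matrix n n K}
    (hX : ∀ t : K, (t • 1 + X).adjugate ≠ 0) : IsNonderogatory X := by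
  intro μ v w hv hw
  have mem_ker : ∀ u, X.mulVec u = μ • u → ((-μ) • 1 + X).mulVec u = 0 := by
    intro u hu
    rw [Matrix.add_mulVec, Matrix.smul_mulVec, Matrix.one_mulVec, hu, neg_smul, neg_add_cancel]
  exact exists_eq_smul_of_mulVec_eq_zero (hX (-μ)) (mem_ker v hv) (mem_ker w hw)

theorem det_eq_zero_of_adjugate_eq_zero [Nonempty n] {M : Matrix n n K} (hM : M.adjugate = 0) :
    M.det = 0 := by
  obtain ⟨i⟩ := ‹Nonempty n›
  simpa [hM] using (congrFun (congrFun M.mul_adjugate i) i).symm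

end Adjugate

section EntryBound

variable {n : Type*} [Fintype n] [DecidableEq n]

theorem norm_apply_le_of_forall_abs_eigenvalues_le {𝕜 : Type*} [RCLike 𝕜] {A : Matrix n n 𝕜}
    (hA : A.IsHermitian) {R : ℝ} (hR : ∀ k, |hA.eigenvalues k| ≤ R) (i j : n) :
    ‖A i j‖ ≤ Fintype.card n * R := by
  set U : Matrix n n 𝕜 := hA.eigenvectorUnitary.1
  have hU1 : ∀ i j, ‖U i j‖ ≤ 1 := entry_norm_bound_of_unitary hA.eigenvectorUnitary.2
  have hspec : A = U * Matrix.diagonal (RCLike.ofReal ∘ hA.eigenvalues) * star U := by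
    conv_lhs => rw [hA.spectral_theorem]
    rw [Unitary.conjStarAlgAut_apply]
  rw [hspec, Matrix.mul_apply]
  refine (norm_sum_le_of_le _ fun k _ => ?_).trans_eq (by simp : ∑ _k : n, R = _)
  rw [Matrix.mul_diagonal, Matrix.star_apply, norm_mul, norm_mul, norm_star, Function.comp_apply,
    RCLike.norm_ofReal]
  have hR0 : 0 ≤ R := (abs_nonneg _).trans (hR k)
  calc ‖U i k‖ * |hA.eigenvalues k| * ‖U j k‖ ≤ 1 * R * 1 := by
        gcongr
        exacts [hU1 i k, hR k, hU1 j k]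
    _ = R := by ring

theorem abs_apply_le_of_forall_root_le {A : Matrix n n ℝ} (hA : A.IsSymm) {R : ℝ}
    (hR : ∀ t : ℝ, (t • (1 : Matrix n n ℝ) + A).det = 0 → |t| ≤ R) (i j : n) :
    |A i j| ≤ Fintype.card n * R := by
  have hH : A.IsHermitian := (Matrix.conjTranspose_eq_transpose_of_trivial A).trans hA
  refine norm_apply_le_of_forall_abs_eigenvalues_le hH (fun k => ?_) i j
  rw [← abs_neg]
  refine hR _ (Matrix.exists_mulVec_eq_zero_iff.1 ⟨⇑(hH.eigenvectorBasis k), ?_, ?_⟩)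
  · exact fun h => hH.eigenvectorBasis.orthonormal.ne_zero k (PiLp.ext (congrFun h))
  · rw [Matrix.add_mulVec, Matrix.smul_mulVec, Matrix.one_mulVec, hH.mulVec_eigenvectorBasis,
      neg_smul, neg_add_cancel]

end EntryBound

namespace TernaryForm

section Singularity

variable {d n : ℕ} {f : TernaryForm d} {K L : Type*} [CommRing K] [Algebra ℝ K] [CommRing L]
  [Algebra ℝ L]

/-- The projective curve `f = 0` has a nonreal singular point whose projection `(x : y)` from the
`t`-axis is nonreal, normalised up to complex conjugation to `y = 1`, `Im x > 0`. Singularity is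
tested on `∂f/∂t` and `∂f/∂x` only, the third derivative being determined by Euler's relation. -/
def HasNonrealSingularity (f : TernaryForm d) : Prop :=
  ∃ t x : ℂ, 0 < x.im ∧ f.eval t x 1 = 0 ∧ f.evalDerivT t x 1 = 0 ∧ f.evalDerivX t x 1 = 0

theorem map_evalDerivT (φ : K →ₐ[ℝ] L) (f : TernaryForm d) (t x y : K) :
    φ (f.evalDerivT t x y) = f.evalDerivT (φ t) (φ x) (φ y) := by
  simp [evalDerivT]

theorem map_evalDerivX (φ : K →ₐ[ℝ] L) (f : TernaryForm d) (t x y : K) :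
    φ (f.evalDerivX t x y) = f.evalDerivX (φ t) (φ x) (φ y) := by
  simp [evalDerivX]

theorem evalDerivT_mul (f : TernaryForm d) (l t x y : K) :
    f.evalDerivT (l * t) (l * x) (l * y) * l = l ^ d * f.evalDerivT t x y := by
  rw [← dividedDiffT_self, ← dividedDiffT_self, dividedDiffT_mul]

theorem evalDerivX_mul (f : TernaryForm d) (l t x y : K) :
    f.evalDerivX (l * t) (l * x) (l * y) * l = l ^ d * f.evalDerivX t x y := by
  simp only [evalDerivX, Finset.mul_sum, Finset.sum_mul, mul_smul_comm, smul_mul_assoc]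
  refine Finset.sum_congr rfl fun m _ => congrArg (f m • ·) ?_
  rcases Nat.eq_zero_or_pos (m.1 1) with h | h
  · simp [h]
  · have hpow : l ^ d = l ^ m.1 0 * (l ^ (m.1 1 - 1) * l) * l ^ m.1 2 := by
      rw [← pow_succ, Nat.sub_add_cancel h, ← pow_add, ← pow_add, m.sum_eq]
    rw [hpow]
    ring

theorem IsStrictlyHyperbolic.hasNonrealSingularity (hf : f.IsStrictlyHyperbolic) {t x y : ℂ}
    (hxy : x ≠ 0 ∨ y ≠ 0) (h0 : f.eval t x y = 0) (hT : f.evalDerivT t x y = 0)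
    (hX : f.evalDerivX t x y = 0) : f.HasNonrealSingularity := by
  have scale : ∀ {l : ℂ}, l ≠ 0 → f.eval (l * t) (l * x) (l * y) = 0 ∧
      f.evalDerivT (l * t) (l * x) (l * y) = 0 ∧ f.evalDerivX (l * t) (l * x) (l * y) = 0 :=
    fun {l} hl => ⟨by rw [eval_mul, h0, mul_zero],
      by simpa [hT, hl] using f.evalDerivT_mul l t x y,
      by simpa [hX, hl] using f.evalDerivX_mul l t x y⟩
  by_cases hy : y = 0
  · have hx : x ≠ 0 := hxy.resolve_right (not_not.2 hy)
    obtain ⟨e0, eT, -⟩ := scale (inv_ne_zero hx)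
    rw [inv_mul_cancel₀ hx, hy, mul_zero] at e0 eT
    exact absurd (by simpa using eT) (hf.2 1 0 (.inl one_ne_zero) _ (by simpa using e0)).2
  obtain ⟨e0, eT, eX⟩ := scale (inv_ne_zero hy)
  rw [inv_mul_cancel₀ hy] at e0 eT eX
  set u := y⁻¹ * t
  set z := y⁻¹ * x
  clear_value u z
  rcases lt_trichotomy z.im 0 with hz | hz | hz
  · have conj_eq_zero : ∀ {a b : ℂ}, a = 0 → Complex.conjAe.toAlgHom a = b → b = 0 :=
      fun ha hab => by rw [← hab, ha, map_zero]
    refine ⟨starRingEnd ℂ u, starRingEnd ℂ z, by simpa using hz, ?_, ?_, ?_⟩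
    · exact conj_eq_zero e0 (by simpa using f.map_eval Complex.conjAe.toAlgHom u z 1)
    · exact conj_eq_zero eT (by simpa using f.map_evalDerivT Complex.conjAe.toAlgHom u z 1)
    · exact conj_eq_zero eX (by simpa using f.map_evalDerivX Complex.conjAe.toAlgHom u z 1)
  · lift z to ℝ using hz
    exact absurd (by simpa using eT) (hf.2 z 1 (.inr one_ne_zero) u (by simpa using e0)).2
  · exact ⟨u, z, hz, e0, eT, eX⟩

theorem evalDerivT_detForm (a : ℝ) (A B : Matrix (Fin d) (Fin d) ℝ) (t x y : ℂ) :
    (detForm a A B).evalDerivT t x y = a • (pencil A B t x y).adjugate.trace := by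
  have hdet : HasDerivAt (fun ε : ℂ => a • (pencil A B t x y + ε • 1).det)
      (a • ((pencil A B t x y).adjugate * 1).trace) 0 :=
    (hasDerivAt_det_add_smul _ 1).const_smul a
  have heval : HasDerivAt (fun ε : ℂ => (detForm a A B).eval (t + ε) x y)
      ((detForm a A B).evalDerivT t x y) 0 := by
    simpa only [add_zero] using
      (hasDerivAt_eval_t (detForm a A B) (t + 0) x y).comp_const_add t 0
  have hfun : (fun ε : ℂ => (detForm a A B).eval (t + ε) x y) =
      fun ε => a • (pencil A B t x y + ε • 1).det := by
    funext ε
    rw [eval_detForm]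
    congr 2
    simp only [pencil]
    module
  rw [mul_one] at hdet
  rw [hfun] at heval
  exact heval.unique hdet

theorem evalDerivX_detForm (a : ℝ) (A B : Matrix (Fin d) (Fin d) ℝ) (t x y : ℂ) :
    (detForm a A B).evalDerivX t x y =
      a • ((pencil A B t x y).adjugate * A.map (algebraMap ℝ ℂ)).trace := by
  have hdet : HasDerivAt (fun ε : ℂ => a • (pencil A B t x y + ε • A.map (algebraMap ℝ ℂ)).det)
      (a • ((pencil A B t x y).adjugate * A.map (algebraMap ℝ ℂ)).trace) 0 :=
    (hasDerivAt_det_add_smul _ _).const_smul a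
  have heval : HasDerivAt (fun ε : ℂ => (detForm a A B).eval t (x + ε) y)
      ((detForm a A B).evalDerivX t x y) 0 := by
    simpa only [add_zero] using
      (hasDerivAt_eval_x (detForm a A B) t (x + 0) y).comp_const_add x 0
  have hfun : (fun ε : ℂ => (detForm a A B).eval t (x + ε) y) =
      fun ε => a • (pencil A B t x y + ε • A.map (algebraMap ℝ ℂ)).det := by
    funext ε
    rw [eval_detForm]
    congr 2
    simp only [pencil]
    module
  rw [hfun] at heval
  exact heval.unique hdet

theorem IsDeterminantal.setOf_isDeterminantal_mem_nhds {f : TernaryForm (n + 1)}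
    (hdet : f.IsDeterminantal) (hf : f.IsStrictlyHyperbolic) (hsing : ¬ f.HasNonrealSingularity) :
    {g : TernaryForm (n + 1) | g.IsDeterminantal} ∈ nhds f := by
  obtain ⟨a, A, B, hA, hB, rfl⟩ := hdet
  have ha : a ≠ 0 := by
    rintro rfl
    simpa [eval_detForm_real] using hf.1
  refine TernaryForm.setOf_isDeterminantal_mem_nhds ha hA hB fun x y hxy =>
    isNonderogatory_of_adjugate_ne_zero fun t hadj => hsing ?_
  rw [← add_assoc] at hadj
  change (pencil A B t x y).adjugate = 0 at hadj
  refine hf.hasNonrealSingularity hxy (t := t) ?_ ?_ ?_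
  · rw [eval_detForm, det_eq_zero_of_adjugate_eq_zero hadj, smul_zero]
  · rw [evalDerivT_detForm, hadj, Matrix.trace_zero, smul_zero]
  · rw [evalDerivX_detForm, hadj, zero_mul, Matrix.trace_zero, smul_zero]

end Singularity

section Closedness

variable {d : ℕ} {f : TernaryForm d}

theorem exists_eventually_forall_root_le (hf : 0 < f.eval (1 : ℝ) 0 0) :
    ∃ R : ℝ, ∀ᶠ g in nhds f, ∀ t x y : ℝ, |x| ≤ 1 → |y| ≤ 1 → g.eval t x y = 0 → |t| ≤ R := by
  have hcont : Continuous fun p : TernaryForm d × ℝ × ℝ => p.1.eval 1 p.2.1 p.2.2 := by fun_prop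
  obtain ⟨ε, hε, hball⟩ := Metric.eventually_nhds_iff_ball.1
    ((hcont.tendsto (f, 0, 0)).eventually (lt_mem_nhds hf))
  refine ⟨ε⁻¹, Filter.eventually_of_mem (Metric.ball_mem_nhds f hε)
    fun g hg t x y hx hy h0 => ?_⟩
  by_contra! ht
  have ht0 : t ≠ 0 := abs_pos.1 ((inv_pos.2 hε).trans ht)
  have hsmall : ∀ s : ℝ, |s| ≤ 1 → t⁻¹ * s ∈ Metric.ball 0 ε := fun s hs => by
    rw [mem_ball_zero_iff, Real.norm_eq_abs, abs_mul, abs_inv]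
    exact (mul_le_of_le_one_right (by positivity) hs).trans_lt (inv_lt_of_inv_lt₀ hε ht)
  have hpos : 0 < g.eval 1 (t⁻¹ * x) (t⁻¹ * y) :=
    hball (g, t⁻¹ * x, t⁻¹ * y) (by
      simpa only [← ball_prod_same] using ⟨hg, hsmall x hx, hsmall y hy⟩)
  have hhom := g.eval_mul t⁻¹ t x y
  rw [h0, mul_zero, inv_mul_cancel₀ ht0] at hhom
  exact hpos.ne' hhom

theorem norm_le_of_forall_root_le {φ : Sym2 (Fin d) → ℝ} {R : ℝ} (hR0 : 0 ≤ R)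
    (hR : ∀ t : ℝ, (t • (1 : Matrix (Fin d) (Fin d) ℝ) + symmetricOfSym2 _ φ).det = 0 → |t| ≤ R) :
    ‖φ‖ ≤ d * R := by
  refine (pi_norm_le_iff_of_nonneg (by positivity)).2 fun z => ?_
  induction z using Sym2.ind with
  | _ i j =>
    simpa only [Fintype.card_fin, symmetricOfSym2_apply, Real.norm_eq_abs] using
      abs_apply_le_of_forall_root_le (isSymm_symmetricOfSym2 φ) hR i j

theorem isDeterminantal_of_mem_closure (hf : 0 < f.eval (1 : ℝ) 0 0)
    (hcl : f ∈ closure {g : TernaryForm d | g.IsDeterminantal}) : f.IsDeterminantal := by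
  obtain ⟨R, hR⟩ := exists_eventually_forall_root_le hf
  have hlead : Continuous fun g : TernaryForm d => g.eval (1 : ℝ) 0 0 := by fun_prop
  set M := max (f.eval (1 : ℝ) 0 0 + 1) (d * |R|)
  have hnear : ∀ᶠ g in nhds f, g.IsDeterminantal →
      g ∈ symmDetForm '' Metric.closedBall 0 M := by
    filter_upwards [hR, (hlead.tendsto f).eventually (lt_mem_nhds hf),
      (hlead.tendsto f).eventually (gt_mem_nhds (lt_add_one _))] with g hroot hpos hlt
    rintro ⟨a, A, B, hA, hB, rfl⟩
    obtain ⟨φ, rfl⟩ := exists_symmetricOfSym2_eq hA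
    obtain ⟨ψ, rfl⟩ := exists_symmetricOfSym2_eq hB
    simp only [eval_detForm_real, one_smul, zero_smul, add_zero, Matrix.det_one, mul_one]
      at hpos hlt
    have hroot' : ∀ t x y : ℝ, |x| ≤ 1 → |y| ≤ 1 → (t • (1 : Matrix (Fin d) (Fin d) ℝ) +
        x • symmetricOfSym2 _ φ + y • symmetricOfSym2 _ ψ).det = 0 → |t| ≤ |R| :=
      fun t x y hx hy h0 => (hroot t x y hx hy (by rw [eval_detForm_real, h0, mul_zero])).trans
        (le_abs_self R)
    refine ⟨(a, φ, ψ), mem_closedBall_zero_iff.2 ?_, rfl⟩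
    refine max_le ?_ (max_le ?_ ?_)
    · exact le_max_of_le_left (by rw [Real.norm_of_nonneg hpos.le]; exact hlt.le)
    · exact le_max_of_le_right <| norm_le_of_forall_root_le (abs_nonneg R) fun t h0 =>
        hroot' t 1 0 (by simp) (by simp) (by simpa using h0)
    · exact le_max_of_le_right <| norm_le_of_forall_root_le (abs_nonneg R) fun t h0 =>
        hroot' t 0 1 (by simp) (by simp) (by simpa using h0)
  have hclosed : IsClosed (symmDetForm '' Metric.closedBall
      (0 : ℝ × (Sym2 (Fin d) → ℝ) × (Sym2 (Fin d) → ℝ)) M) :=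
    ((isCompact_closedBall 0 M).image contDiff_symmDetForm.continuous).isClosed
  obtain ⟨p, -, rfl⟩ := hclosed.mem_of_frequently_of_tendsto
    ((mem_closure_iff_frequently.1 hcl).mp (hnear.mono fun _ => id)) Filter.tendsto_id
  exact ⟨_, _, _, isSymm_symmetricOfSym2 _, isSymm_symmetricOfSym2 _, rfl⟩

end Closedness

end TernaryForm

section ParametricTransversality

variable {P E F G : Type*} [NormedAddCommGroup P] [NormedSpace ℝ P] [FiniteDimensional ℝ P]
  [NormedAddCommGroup E] [NormedSpace ℝ E] [FiniteDimensional ℝ E]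
  [NormedAddCommGroup F] [NormedSpace ℝ F]
  [NormedAddCommGroup G] [NormedSpace ℝ G] [FiniteDimensional ℝ G]

/- Every solution `e` of `J p e = b p` is determined by `p` and its component along a complement of
the range of `ι`, so the solutions form the image of a `C¹` map from a space of dimension
`dim P + dim E - dim G < dim E`. -/
theorem dense_setOf_forall_apply_ne {Ω : Set P} (hΩ : Convex ℝ Ω) {J : P → E →L[ℝ] F} {b : P → F}
    (hJ : ContDiffOn ℝ 1 J Ω) (hb : ContDiffOn ℝ 1 b Ω) (ι : G →L[ℝ] E)
    (hι : ∀ p ∈ Ω, (J p ∘L ι).IsInvertible)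
    (hdim : Module.finrank ℝ P < Module.finrank ℝ G) : Dense {e | ∀ p ∈ Ω, J p e ≠ b p} := by
  rcases Ω.eq_empty_or_nonempty with rfl | ⟨p₀, hp₀⟩
  · simp
  have := FiniteDimensional.complete ℝ G
  have ι_injective : Function.Injective ι := by
    obtain ⟨e, he⟩ := hι p₀ hp₀
    refine Function.Injective.of_comp (f := J p₀) ?_
    exact (congrArg (fun f : G →L[ℝ] F => Function.Injective f) he).mp e.injective
  obtain ⟨W, hW⟩ := Submodule.exists_isCompl (LinearMap.range (ι : G →ₗ[ℝ] E))
  let Φ : P × W → E := fun q => q.2 + ι ((J q.1 ∘L ι).inverse (b q.1 - J q.1 q.2))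
  have contDiffOn_Φ : ContDiffOn ℝ 1 Φ (Ω ×ˢ Set.univ) := by
    have hfst : Set.MapsTo Prod.fst (Ω ×ˢ (Set.univ : Set W)) Ω := fun q hq => hq.1
    have hw : ContDiffOn ℝ 1 (fun q : P × W => (q.2 : E)) (Ω ×ˢ Set.univ) :=
      (W.subtypeL.contDiff.comp contDiff_snd).contDiffOn
    have hJ' := hJ.comp contDiff_fst.contDiffOn hfst
    have hinv : ContDiffOn ℝ 1 (fun q : P × W => (J q.1 ∘L ι).inverse) (Ω ×ˢ Set.univ) :=
      fun q hq => ContDiffAt.comp_contDiffWithinAt (g := ContinuousLinearMap.inverse)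
        (f := fun q : P × W => J q.1 ∘L ι) q (hι q.1 hq.1).contDiffAt_map_inverse
        (hJ'.clm_comp contDiffOn_const q hq)
    exact hw.add (ι.contDiff.comp_contDiffOn
      (hinv.clm_apply ((hb.comp contDiff_fst.contDiffOn hfst).sub (hJ'.clm_apply hw))))
  have dim_lt : dimH (Ω ×ˢ (Set.univ : Set W)) < Module.finrank ℝ E := by
    refine (dimH_mono (Set.subset_univ _)).trans_lt ?_
    rw [Real.dimH_univ_eq_finrank, Nat.cast_lt, Module.finrank_prod,
      ← Submodule.finrank_add_eq_of_isCompl hW, LinearMap.finrank_range_of_inj ι_injective]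
    exact Nat.add_lt_add_right hdim _
  have dense_compl_image := contDiffOn_Φ.dense_compl_image_of_dimH_lt_finrank
    (hΩ.prod convex_univ) subset_rfl dim_lt
  refine dense_compl_image.mono ?_
  intro e he p hp hpe
  apply he
  obtain ⟨⟨_, g, rfl⟩, w, rfl, -⟩ := Submodule.existsUnique_add_of_isCompl hW e
  refine ⟨(p, w), ⟨hp, trivial⟩, ?_⟩
  have hg : (J p ∘L ι) g = b p - J p w := by
    rw [← hpe, map_add]
    exact (add_sub_cancel_right _ _).symm
  change (w : E) + ι ((J p ∘L ι).inverse (b p - J p w)) = ι g + w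
  rw [← hg, (hι p hp).inverse_apply_self, add_comm]

end ParametricTransversality

namespace TernaryForm

variable {d : ℕ}

section LowDegree

theorem not_hasNonrealSingularity_of_degree_one {f : TernaryForm 1} (hf : f.IsStrictlyHyperbolic) :
    ¬ f.HasNonrealSingularity := by
  rintro ⟨t, x, -, -, hT, -⟩
  have evalDerivT_eq : f.evalDerivT t x 1 = (f.eval (1 : ℝ) 0 0 : ℝ) := by
    rw [ofReal_eval, evalDerivT, eval]
    refine Finset.sum_congr rfl fun m _ => ?_
    have hm := m.sum_eq
    rcases Nat.eq_zero_or_pos (m.1 0) with h0 | h0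
    · rcases (show m.1 1 ≠ 0 ∨ m.1 2 ≠ 0 by lia) with h | h <;> simp [h0, h]
    · simp [show m.1 0 = 1 by lia, show m.1 1 = 0 by lia, show m.1 2 = 0 by lia]
  rw [evalDerivT_eq, Complex.ofReal_eq_zero] at hT
  exact hf.1.ne' hT

theorem natCast_mul_eval_zero {K : Type*} [CommRing K] [Algebra ℝ K] (f : TernaryForm d) (t x : K) :
    d * f.eval t x 0 = t * f.evalDerivT t x 0 + x * f.evalDerivX t x 0 := by
  have mul_pow_pred (a : K) (k : ℕ) : a * (k * a ^ (k - 1)) = k * a ^ k := by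
    cases k <;> simp [pow_succ]; ring
  simp only [eval, evalDerivT, evalDerivX, Finset.mul_sum, ← Finset.sum_add_distrib,
    mul_smul_comm, ← smul_add]
  refine Finset.sum_congr rfl fun m _ => congrArg (f m • ·) ?_
  rcases eq_or_ne (m.1 2) 0 with h | h
  · have hd : (d : K) = m.1 0 + m.1 1 := by
      exact_mod_cast congrArg (Nat.cast (R := K)) (by simpa [h] using m.sum_eq.symm)
    rw [hd]
    linear_combination (-x ^ m.1 1 * 0 ^ m.1 2) * mul_pow_pred t (m.1 0) -
      (t ^ m.1 0 * 0 ^ m.1 2) * mul_pow_pred x (m.1 1)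
  · simp [h]

theorem im_evalDerivT_one (f : TernaryForm 2) (t x : ℂ) :
    (f.evalDerivT t x 1).im = f.evalDerivT t.im x.im 0 := by
  simp only [evalDerivT, Complex.im_sum]
  refine Finset.sum_congr rfl fun m _ => ?_
  have hm := m.sum_eq
  obtain ⟨h0, h1⟩ : m.1 0 ≤ 2 ∧ m.1 1 ≤ 2 := by lia
  interval_cases m.1 0 <;> interval_cases m.1 1 <;>
    first | lia | simp [pow_succ, show m.1 2 = _ from Nat.eq_sub_of_add_eq' hm]

theorem im_evalDerivX_one (f : TernaryForm 2) (t x : ℂ) :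
    (f.evalDerivX t x 1).im = f.evalDerivX t.im x.im 0 := by
  simp only [evalDerivX, Complex.im_sum]
  refine Finset.sum_congr rfl fun m _ => ?_
  have hm := m.sum_eq
  obtain ⟨h0, h1⟩ : m.1 0 ≤ 2 ∧ m.1 1 ≤ 2 := by lia
  interval_cases m.1 0 <;> interval_cases m.1 1 <;>
    first | lia | simp [pow_succ, show m.1 2 = _ from Nat.eq_sub_of_add_eq' hm]

/- The partial derivatives of a quadratic form are linear, so the imaginary part of a singular point
is a real singular point. -/
theorem not_hasNonrealSingularity_of_degree_two {f : TernaryForm 2} (hf : f.IsStrictlyHyperbolic) :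
    ¬ f.HasNonrealSingularity := by
  rintro ⟨t, x, hx, -, hT, hX⟩
  have hT' : f.evalDerivT t.im x.im 0 = 0 := by rw [← im_evalDerivT_one, hT, Complex.zero_im]
  have hX' : f.evalDerivX t.im x.im 0 = 0 := by rw [← im_evalDerivX_one, hX, Complex.zero_im]
  have h0 : f.eval t.im x.im 0 = 0 := by
    simpa [hT', hX'] using natCast_mul_eval_zero f t.im x.im
  refine (hf.2 x.im 0 (Or.inl hx.ne') t.im ?_).2 ?_
  · rw [← Complex.ofReal_zero, ← ofReal_eval, h0]
  · simpa [hT'] using (map_evalDerivT Complex.ofRealAm f t.im x.im 0).symm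

end LowDegree

noncomputable section SingularJet

/-- The data whose vanishing makes `(t : x : 1)` a singular point of `f = 0`. -/
def singularJet (t x : ℂ) : TernaryForm d →ₗ[ℝ] ℂ × ℂ × ℂ where
  toFun f := (f.eval t x 1, f.evalDerivT t x 1, f.evalDerivX t x 1)
  map_add' f g := by simp [eval, evalDerivT, evalDerivX, add_mul, Finset.sum_add_distrib]
  map_smul' r f := by simp [eval, evalDerivT, evalDerivX, mul_assoc, Finset.mul_sum]

theorem singularJet_eq_zero_iff {f : TernaryForm d} {t x : ℂ} : singularJet t x f = 0 ↔
    f.eval t x 1 = 0 ∧ f.evalDerivT t x 1 = 0 ∧ f.evalDerivX t x 1 = 0 := by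
  simp [singularJet]

theorem singularJet_single (t x : ℂ) (m : TernaryExponent d) :
    singularJet t x (Pi.single m 1) = (t ^ m.1 0 * x ^ m.1 1,
      m.1 0 * t ^ (m.1 0 - 1) * x ^ m.1 1, t ^ m.1 0 * (m.1 1 * x ^ (m.1 1 - 1))) := by
  simp only [singularJet, LinearMap.coe_mk, AddHom.coe_mk, eval, evalDerivT, evalDerivX,
    Pi.single_apply, ite_smul, one_smul, zero_smul, Finset.sum_ite_eq', Finset.mem_univ, if_true,
    one_pow, mul_one]

theorem contDiff_singularJet {P : Type*} [NormedAddCommGroup P] [NormedSpace ℝ P] {t x : P → ℂ}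
    (ht : ContDiff ℝ 1 t) (hx : ContDiff ℝ 1 x) (f : TernaryForm d) :
    ContDiff ℝ 1 fun p => singularJet (t p) (x p) f := by
  simp only [singularJet, LinearMap.coe_mk, AddHom.coe_mk, eval, evalDerivT, evalDerivX]
  fun_prop

theorem exists_exponent_eq {i j : ℕ} (h : i + j ≤ d) :
    ∃ m : TernaryExponent d, m.1 0 = i ∧ m.1 1 = j :=
  ⟨⟨Finsupp.equivFunOnFinite.symm ![i, j, d - (i + j)], by
    simp [Finset.mem_finsuppAntidiag, Fin.sum_univ_three, h]⟩, rfl, rfl⟩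

open ComplexConjugate in
theorem eq_zero_of_nonreal_double_root {a b c e : ℝ} {z : ℂ} (hz : z.im ≠ 0)
    (h0 : a + b * z + c * z ^ 2 + e * z ^ 3 = 0) (h1 : b + 2 * c * z + 3 * e * z ^ 2 = 0) :
    a = 0 ∧ b = 0 ∧ c = 0 ∧ e = 0 := by
  have h0' := congrArg conj h0
  have h1' := congrArg conj h1
  simp only [map_add, map_mul, map_pow, map_zero, map_ofNat, Complex.conj_ofReal] at h0' h1'
  have sub_ne : z - conj z ≠ 0 := sub_ne_zero.2 fun h => hz (Complex.conj_eq_iff_im.1 h.symm)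
  have he : e = 0 := by
    have : (e : ℂ) * (z - conj z) ^ 3 = 0 := by
      linear_combination (z - conj z) * (h1 + h1') - 2 * (h0 - h0')
    simpa [sub_ne] using this
  rw [he, Complex.ofReal_zero] at h1 h1' h0
  have hc : c = 0 := by
    have : (c : ℂ) * (z - conj z) = 0 := by linear_combination (h1 - h1') / 2
    simpa [sub_ne] using this
  have hb : b = 0 := by simpa [hc] using h1
  exact ⟨by simpa [hc, hb] using h0, hb, hc, he⟩

theorem exists_singularJet_section (hd : 3 ≤ d) : ∃ ι : (Fin 6 → ℝ) →ₗ[ℝ] TernaryForm d,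
    ∀ t x : ℂ, x.im ≠ 0 → Function.Bijective (singularJet t x ∘ₗ ι) := by
  choose m hm0 hm1 using fun k : Fin 6 => exists_exponent_eq (d := d)
    (i := ![0, 0, 0, 0, 1, 1] k) (j := ![0, 1, 2, 3, 0, 1] k) (by fin_cases k <;> simp <;> lia)
  let ι : (Fin 6 → ℝ) →ₗ[ℝ] TernaryForm d :=
    Fintype.linearCombination ℝ fun k => Pi.single (m k) 1
  refine ⟨ι, fun t x hx => ?_⟩
  have injective : Function.Injective (singularJet t x ∘ₗ ι) := by
    rw [← LinearMap.ker_eq_bot, LinearMap.ker_eq_bot']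
    intro r hr
    obtain ⟨h0, hT, hX⟩ : r 0 + r 1 * x + r 2 * x ^ 2 + r 3 * x ^ 3 + r 4 * t + r 5 * (t * x) = 0 ∧
        r 4 + r 5 * x = 0 ∧ r 1 + r 2 * (2 * x) + r 3 * (3 * x ^ 2) + r 5 * t = 0 := by
      simpa [ι, Fintype.linearCombination_apply, Fin.sum_univ_six, singularJet_single, hm0, hm1]
        using hr
    obtain ⟨h4, h5⟩ : r 4 = 0 ∧ r 5 = 0 := by
      have h5 : r 5 = 0 := by simpa [hx] using congrArg Complex.im hT
      exact ⟨by simpa [h5] using hT, h5⟩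
    rw [h4, h5, Complex.ofReal_zero] at h0
    rw [h5, Complex.ofReal_zero] at hX
    obtain ⟨h0, h1, h2, h3⟩ := eq_zero_of_nonreal_double_root hx (a := r 0) (b := r 1) (c := r 2)
      (e := r 3) (by linear_combination h0) (by linear_combination hX)
    ext k
    fin_cases k <;> assumption
  have finrank_eq : Module.finrank ℝ (Fin 6 → ℝ) = Module.finrank ℝ (ℂ × ℂ × ℂ) := by
    simp [Complex.finrank_real_complex]
  exact ⟨injective,
    (LinearMap.injective_iff_surjective_of_finrank_eq_finrank finrank_eq).1 injective⟩

theorem dense_setOf_forall_not_hasNonrealSingularity (hd : 3 ≤ d) (f : TernaryForm d) :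
    Dense {g : TernaryForm d | ∀ σ : ℝ, 0 < σ →
      ¬ ((1 - σ) • f + σ • g).HasNonrealSingularity} := by
  obtain ⟨ι, hι⟩ := exists_singularJet_section hd
  let Ω : Set (ℂ × ℂ × ℝ) := Set.univ ×ˢ {x | 0 < x.im} ×ˢ Set.Ioi 0
  let J (p : ℂ × ℂ × ℝ) : TernaryForm d →L[ℝ] ℂ × ℂ × ℂ :=
    (p.2.2 • singularJet p.1 p.2.1).toContinuousLinearMap
  let b (p : ℂ × ℂ × ℝ) : ℂ × ℂ × ℂ := (p.2.2 - 1) • singularJet p.1 p.2.1 f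
  have contDiff_jet (g : TernaryForm d) :
      ContDiff ℝ 1 fun p : ℂ × ℂ × ℝ => singularJet p.1 p.2.1 g :=
    contDiff_singularJet contDiff_fst contDiff_snd.fst g
  have contDiff_J : ContDiff ℝ 1 J :=
    contDiff_clm_apply_iff.2 fun g => contDiff_snd.snd.smul (contDiff_jet g)
  have contDiff_b : ContDiff ℝ 1 b := (contDiff_snd.snd.sub contDiff_const).smul (contDiff_jet f)
  have isInvertible : ∀ p ∈ Ω, (J p ∘L ι.toContinuousLinearMap).IsInvertible := by
    rintro ⟨t, x, σ⟩ ⟨-, hx, hσ⟩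
    have hσ0 : σ ≠ 0 := ne_of_gt hσ
    have bij : Function.Bijective (σ • (singularJet t x ∘ₗ ι)) :=
      (MulAction.bijective₀ hσ0).comp (hι t x (ne_of_gt hx))
    exact ⟨(LinearEquiv.ofBijective _ bij).toContinuousLinearEquiv, rfl⟩
  have dim_lt : Module.finrank ℝ (ℂ × ℂ × ℝ) < Module.finrank ℝ (Fin 6 → ℝ) := by
    simp [Complex.finrank_real_complex]
  have dense := dense_setOf_forall_apply_ne
    (convex_univ.prod ((convex_halfSpace_im_gt 0).prod (convex_Ioi 0)))
    contDiff_J.contDiffOn contDiff_b.contDiffOn _ isInvertible dim_lt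
  refine dense.mono ?_
  rintro g hg σ hσ ⟨t, x, hx, hzero⟩
  have hjet := singularJet_eq_zero_iff.2 hzero
  rw [map_add, map_smul, map_smul] at hjet
  refine hg (t, x, σ) ⟨trivial, hx, hσ⟩ ?_
  change σ • singularJet t x g = (σ - 1) • singularJet t x f
  rw [← neg_sub 1 σ, neg_smul]
  exact eq_neg_of_add_eq_zero_right hjet

end SingularJet

theorem dense_setOf_segment_smooth (hd : 0 < d) (f : TernaryForm d) :
    Dense {g : TernaryForm d | ∀ σ : ℝ, 0 < σ → ((1 - σ) • f + σ • g).IsStrictlyHyperbolic →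
      ¬ ((1 - σ) • f + σ • g).HasNonrealSingularity} := by
  obtain rfl | rfl | h : d = 1 ∨ d = 2 ∨ 3 ≤ d := by lia
  · exact dense_univ.mono fun g _ σ _ => not_hasNonrealSingularity_of_degree_one
  · exact dense_univ.mono fun g _ σ _ => not_hasNonrealSingularity_of_degree_two
  · refine (dense_setOf_forall_not_hasNonrealSingularity h f).mono ?_
    exact fun g hg σ hσ _ => hg σ hσ

end TernaryForm

section Nonderogatory

variable {K : Type*} [Field K]

theorem isNonderogatory_diagonal {n : Type*} [Fintype n] [DecidableEq n] {a : n → K}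
    (ha : Function.Injective a) : IsNonderogatory (Matrix.diagonal a) := by
  intro μ v w hv hw hv0
  obtain ⟨k, hk⟩ := Function.ne_iff.1 hv0
  have eigen (u : n → K) (hu : (Matrix.diagonal a).mulVec u = μ • u) (i : n) :
      u i = 0 ∨ a i = μ := by
    have := congrFun hu i
    rw [Matrix.mulVec_diagonal, Pi.smul_apply, smul_eq_mul] at this
    exact (mul_eq_mul_right_iff.1 this).symm
  have hμ : a k = μ := (eigen v hv k).resolve_left hk
  refine ⟨w k / v k, funext fun i => ?_⟩
  rcases eq_or_ne i k with rfl | hik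
  · exact (div_mul_cancel₀ _ hk).symm
  · have hai : a i ≠ μ := fun h => hik (ha (h.trans hμ.symm))
    simp [(eigen v hv i).resolve_right hai, (eigen w hw i).resolve_right hai]

/- The equation in row `i` of `X v = μ v` determines `v (i + 1)` from `v 0, …, v i`. -/
theorem isNonderogatory_of_superdiagonal_ne_zero {n : ℕ} {X : Matrix (Fin (n + 1)) (Fin (n + 1)) K}
    (hsuper : ∀ i : Fin n, X i.castSucc i.succ ≠ 0)
    (hzero : ∀ i j : Fin (n + 1), (i : ℕ) + 1 < j → X i j = 0) : IsNonderogatory X := by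
  have eq_zero_of_apply_zero (μ : K) (u : Fin (n + 1) → K) (hu : X.mulVec u = μ • u)
      (hu0 : u 0 = 0) : u = 0 := by
    funext j
    induction j using WellFoundedLT.induction with | ind j ih => ?_
    cases j using Fin.cases with
    | zero => exact hu0
    | succ i =>
      have row : ∑ k, X i.castSucc k * u k = μ * u i.castSucc := congrFun hu i.castSucc
      have other_eq_zero (k : Fin (n + 1)) (hk : k ≠ i.succ) : X i.castSucc k * u k = 0 := by
        rcases hk.lt_or_gt with hlt | hgt
        · rw [ih k hlt, Pi.zero_apply, mul_zero]
        · rw [hzero i.castSucc k (Fin.lt_def.1 hgt), zero_mul]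
      rw [Fintype.sum_eq_single i.succ other_eq_zero] at row
      rw [ih _ i.castSucc_lt_succ, Pi.zero_apply, mul_zero] at row
      exact (mul_eq_zero.1 row).resolve_left (hsuper i)
  intro μ v w hv hw hv0
  have hv00 : v 0 ≠ 0 := fun h => hv0 (eq_zero_of_apply_zero μ v hv h)
  refine ⟨w 0 / v 0, sub_eq_zero.1 (eq_zero_of_apply_zero μ _ ?_ ?_)⟩
  · rw [Matrix.mulVec_sub, Matrix.mulVec_smul, hv, hw, smul_sub, smul_comm]
  · simp [hv00]

/-- The symmetric tridiagonal matrix with zero diagonal and unit off-diagonal entries. -/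
def pathMatrix (R : Type*) [Zero R] [One R] (n : ℕ) : Matrix (Fin n) (Fin n) R :=
  Matrix.of fun i j => if (i : ℕ) + 1 = j ∨ (j : ℕ) + 1 = i then 1 else 0

theorem isSymm_pathMatrix (R : Type*) [Zero R] [One R] (n : ℕ) : (pathMatrix R n).IsSymm := by
  ext i j
  simp [pathMatrix, or_comm]

theorem isNonderogatory_smul_diagonal_add_smul_pathMatrix [CharZero K] {n : ℕ} {x y : K}
    (hxy : x ≠ 0 ∨ y ≠ 0) : IsNonderogatory
      (x • Matrix.diagonal (fun i : Fin (n + 1) => ((i : ℕ) : K)) + y • pathMatrix K (n + 1)) := by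
  by_cases hy : y = 0
  · rw [hy, zero_smul, add_zero, ← Matrix.diagonal_smul]
    refine isNonderogatory_diagonal ?_
    have hx : x ≠ 0 := hxy.resolve_right (not_not.2 hy)
    exact (mul_right_injective₀ hx).comp (Nat.cast_injective.comp Fin.val_injective)
  · refine isNonderogatory_of_superdiagonal_ne_zero (fun i => ?_) fun i j hij => ?_
    · simpa [pathMatrix, Matrix.diagonal_apply_ne _ i.castSucc_lt_succ.ne] using hy
    · have hne : i ≠ j := fun h => by lia
      simp [pathMatrix, hne]
      lia

end Nonderogatory

namespace TernaryForm

theorem isRealRooted_polyT_detForm {d : ℕ} {a : ℝ} (ha : a ≠ 0)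
    {A B : Matrix (Fin d) (Fin d) ℝ} (hA : A.IsSymm) (hB : B.IsSymm) (x y : ℝ) :
    IsRealRooted ((detForm a A B).polyT x y) := by
  intro t ht
  set H : Matrix (Fin d) (Fin d) ℂ :=
    (x : ℂ) • A.map (algebraMap ℝ ℂ) + (y : ℂ) • B.map (algebraMap ℝ ℂ) with hH
  have isHermitian : H.IsHermitian := by
    ext i j
    simp [H, hA.apply i j, hB.apply i j]
  have det_eq_zero : (t • 1 + H).det = 0 := by
    rw [eval_polyT, eval_detForm] at ht
    simpa [pencil, add_assoc, ha, hH] using ht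
  have mem_spectrum : -t ∈ spectrum ℂ H := by
    rw [spectrum.mem_iff, Matrix.isUnit_iff_isUnit_det, Algebra.algebraMap_eq_smul_one, neg_smul,
      ← neg_add', Matrix.det_neg, det_eq_zero, mul_zero]
    exact not_isUnit_zero
  rw [isHermitian.spectrum_eq_image_range] at mem_spectrum
  obtain ⟨r, -, hr⟩ := mem_spectrum
  rw [← neg_neg t, ← hr]
  simp

theorem isHyperbolic_detForm {d : ℕ} {a : ℝ} (ha : 0 < a) {A B : Matrix (Fin d) (Fin d) ℝ}
    (hA : A.IsSymm) (hB : B.IsSymm) : (detForm a A B).IsHyperbolic :=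
  ⟨by simpa [eval_detForm_real] using ha, isRealRooted_polyT_detForm ha.ne' hA hB⟩

section Continuation

variable {n : ℕ} {f g : TernaryForm (n + 1)}

theorem IsDeterminantal.of_segment (hf : {h : TernaryForm (n + 1) | h.IsDeterminantal} ∈ nhds f)
    (hstrict : ∀ σ ∈ Set.Icc (0 : ℝ) 1, ((1 - σ) • f + σ • g).IsStrictlyHyperbolic)
    (hsmooth : ∀ σ ∈ Set.Ioo (0 : ℝ) 1, ¬ ((1 - σ) • f + σ • g).HasNonrealSingularity) :
    g.IsDeterminantal := by
  set F : ℝ → TernaryForm (n + 1) := fun σ => (1 - σ) • f + σ • g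
  have hF0 : F 0 = f := by simp [F]
  have continuous_F : Continuous F := by fun_prop
  have isClosed : IsClosed ({σ | (F σ).IsDeterminantal} ∩ Set.Icc (0 : ℝ) 1) := by
    refine isClosed_of_closure_subset fun σ hσ => ?_
    have hσI : σ ∈ Set.Icc (0 : ℝ) 1 :=
      isClosed_Icc.closure_subset (closure_mono Set.inter_subset_right hσ)
    refine ⟨isDeterminantal_of_mem_closure (hstrict σ hσI).1 ?_, hσI⟩
    exact map_mem_closure continuous_F (closure_mono Set.inter_subset_left hσ) fun _ h => h
  have hF1 : (1 : ℝ) ∈ {σ | (F σ).IsDeterminantal} := by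
    refine isClosed.mem_of_ge_of_forall_exists_gt ?_ zero_le_one ?_
    · simpa only [Set.mem_ofPred_eq, hF0] using mem_of_mem_nhds hf
    · rintro σ ⟨hdet, hσ0, hσ1⟩
      have mem_nhds : {h : TernaryForm (n + 1) | h.IsDeterminantal} ∈ nhds (F σ) := by
        rcases hσ0.eq_or_lt with rfl | hpos
        · rwa [hF0]
        · exact hdet.setOf_isDeterminantal_mem_nhds (hstrict σ ⟨hσ0, hσ1.le⟩)
            (hsmooth σ ⟨hpos, hσ1⟩)
      exact Filter.nonempty_of_mem (Filter.inter_mem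
        (mem_nhdsWithin_of_mem_nhds (continuous_F.continuousAt mem_nhds)) (Ioc_mem_nhdsGT hσ1))
  simpa [F] using hF1

theorem subset_setOf_isDeterminantal {U : Set (TernaryForm (n + 1))} (hUo : IsOpen U)
    (hUc : Convex ℝ U) (hU : ∀ f ∈ U, f.IsStrictlyHyperbolic) (hfU : f ∈ U)
    (hf : {h : TernaryForm (n + 1) | h.IsDeterminantal} ∈ nhds f) :
    U ⊆ {g | g.IsDeterminantal} := by
  intro g hg
  refine isDeterminantal_of_mem_closure (hU g hg).1 (closure_mono ?_
    ((dense_setOf_segment_smooth n.succ_pos f).open_subset_closure_inter hUo hg))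
  rintro h ⟨hhU, hh⟩
  have segment_subset : ∀ σ ∈ Set.Icc (0 : ℝ) 1, ((1 - σ) • f + σ • h).IsStrictlyHyperbolic :=
    fun σ hσ => hU _ (hUc hfU hhU (sub_nonneg.2 hσ.2) hσ.1 (sub_add_cancel 1 σ))
  exact .of_segment hf segment_subset fun σ hσ =>
    hh σ hσ.1 (segment_subset σ (Set.Ioo_subset_Icc_self hσ))

theorem IsHyperbolic.nuijPath_mem_interior (hg : g.IsHyperbolic) {s₀ s : ℝ} (hs₀ : s₀ < 1)
    (h₀ : g.nuijPath s₀ ∈ interior {h : TernaryForm (n + 1) | h.IsDeterminantal}) (hs : s < 1) :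
    g.nuijPath s ∈ interior {h : TernaryForm (n + 1) | h.IsDeterminantal} := by
  have isOpen : IsOpen (g.nuijPath ⁻¹' interior {h | h.IsDeterminantal}) :=
    isOpen_interior.preimage g.continuous_nuijPath
  refine isPreconnected_Iio.subset_of_closure_inter_subset isOpen ⟨s₀, hs₀, h₀⟩ ?_ hs
  rintro σ ⟨hσ, hσ1⟩
  obtain ⟨ε, hε, hball⟩ := Metric.isOpen_iff.1 isOpen_setOf_isStrictlyHyperbolic _
    (hg.isStrictlyHyperbolic_nuijPath (ne_of_lt hσ1))
  obtain ⟨τ, hτε, hτ⟩ := mem_closure_iff_nhds.1 hσ _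
    (g.continuous_nuijPath.continuousAt (Metric.ball_mem_nhds _ hε))
  refine mem_interior_iff_mem_nhds.2 (Filter.mem_of_superset (Metric.ball_mem_nhds _ hε) ?_)
  exact subset_setOf_isDeterminantal Metric.isOpen_ball (convex_ball _ _) (fun f hf => hball hf)
    hτε (mem_interior_iff_mem_nhds.1 hτ)

theorem exists_isHyperbolic_mem_interior (n : ℕ) {a : ℝ} (ha : 0 < a) :
    ∃ f : TernaryForm (n + 1), f.IsHyperbolic ∧ f.eval (1 : ℝ) 0 0 = a ∧
      f ∈ interior {h : TernaryForm (n + 1) | h.IsDeterminantal} := by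
  have hA := Matrix.isSymm_diagonal fun i : Fin (n + 1) => ((i : ℕ) : ℝ)
  have hB := isSymm_pathMatrix ℝ (n + 1)
  refine ⟨detForm a _ _, isHyperbolic_detForm ha hA hB, by simp [eval_detForm_real],
    mem_interior_iff_mem_nhds.2 (setOf_isDeterminantal_mem_nhds ha.ne' hA hB fun x y hxy => ?_)⟩
  convert isNonderogatory_smul_diagonal_add_smul_pathMatrix hxy using 3
  · simp [Matrix.diagonal_map]
  · ext i j
    simp only [pathMatrix, Matrix.map_apply, Matrix.of_apply]
    split_ifs <;> simp

theorem IsHyperbolic.isDeterminantal (hg : g.IsHyperbolic) : g.IsDeterminantal := by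
  obtain ⟨f, hf, hlead, hint⟩ := exists_isHyperbolic_mem_interior n hg.1
  obtain ⟨s, hs, hs1⟩ : ∃ s, f.nuijPath s ∈ interior {h | h.IsDeterminantal} ∧ s < 1 := by
    have hnear : ∀ᶠ s in nhds (1 : ℝ), f.nuijPath s ∈ interior {h | h.IsDeterminantal} :=
      (isOpen_interior.preimage f.continuous_nuijPath).mem_nhds (by simpa [nuijPath_one] using hint)
    exact ((hnear.filter_mono nhdsWithin_le_nhds).and (self_mem_nhdsWithin (s := Set.Iio 1))).exists
  have hstart : g.nuijPath 0 ∈ interior {h | h.IsDeterminantal} := by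
    rw [nuijPath_zero_congr hlead.symm]
    exact hf.nuijPath_mem_interior hs1 hs zero_lt_one
  refine isDeterminantal_of_mem_closure hg.1 ?_
  have tendsto : Filter.Tendsto g.nuijPath (nhdsWithin 1 (Set.Iio 1)) (nhds g) := by
    simpa only [nuijPath_one] using (g.continuous_nuijPath.tendsto 1).mono_left nhdsWithin_le_nhds
  refine mem_closure_of_tendsto tendsto ?_
  filter_upwards [self_mem_nhdsWithin] with s hs
  exact interior_subset (s := {h | IsDeterminantal h})
    (hg.nuijPath_mem_interior zero_lt_one hstart hs)

end Continuation

end TernaryForm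

/- Each root `r` satisfies `R ≤ ‖r‖`, hence `‖s - r‖ ≤ (1 + ‖s‖ / R) * ‖r‖`. -/
theorem norm_eval_le_of_forall_norm_lt {q : Polynomial ℂ} {D : ℕ} (hD : q.natDegree ≤ D) {R : ℝ}
    (hR : 0 < R) (hq : ∀ s : ℂ, ‖s‖ < R → q.eval s ≠ 0) (s : ℂ) :
    ‖q.eval s‖ ≤ (1 + ‖s‖ / R) ^ D * ‖q.eval 0‖ := by
  have norm_root_le (r : ℂ) (hr : r ∈ q.roots) : R ≤ ‖r‖ :=
    not_lt.1 fun h => hq r h (Polynomial.isRoot_of_mem_roots hr)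
  have one_le : 1 ≤ 1 + ‖s‖ / R := le_add_of_nonneg_right (by positivity)
  have norm_factor_le (r : ℂ) (hr : r ∈ q.roots) : ‖s - r‖ ≤ (1 + ‖s‖ / R) * ‖0 - r‖ :=
    calc ‖s - r‖ ≤ ‖s‖ / R * R + ‖r‖ := by
          rw [div_mul_cancel₀ _ hR.ne']
          exact norm_sub_le s r
      _ ≤ ‖s‖ / R * ‖r‖ + ‖r‖ := by gcongr; exact norm_root_le r hr
      _ = (1 + ‖s‖ / R) * ‖0 - r‖ := by rw [zero_sub, norm_neg]; ring
  have norm_prod_le : (q.roots.map fun r => ‖s - r‖).prod ≤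
      (1 + ‖s‖ / R) ^ q.roots.card * (q.roots.map fun r => ‖0 - r‖).prod := by
    rw [← Multiset.prod_replicate, ← Multiset.map_const', ← Multiset.prod_map_mul]
    exact Multiset.prod_map_le_prod_map₀ _ _ (fun _ _ => norm_nonneg _) norm_factor_le
  have norm_eval_eq (z : ℂ) :
      ‖q.eval z‖ = ‖q.leadingCoeff‖ * (q.roots.map fun r => ‖z - r‖).prod := by
    rw [(IsAlgClosed.splits q).eval_eq_prod_roots, norm_mul]
    refine congrArg _ ((map_multiset_prod (normHom : ℂ →*₀ ℝ) _).trans ?_)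
    rw [Multiset.map_map]
    rfl
  have prod_nonneg : 0 ≤ (q.roots.map fun r => ‖0 - r‖).prod :=
    Multiset.prod_map_nonneg fun _ _ => norm_nonneg _
  rw [norm_eval_eq, norm_eval_eq, mul_left_comm]
  gcongr
  refine norm_prod_le.trans ?_
  gcongr
  exact (Polynomial.card_roots' q).trans hD

theorem posSemidef_of_forall_det_ne_zero {n : Type*} [Fintype n] [DecidableEq n]
    {A : Matrix n n ℝ} (hA : A.IsSymm) (h : ∀ l : ℝ, 0 < l → (l • 1 + A).det ≠ 0) :
    A.PosSemidef := by
  refine Matrix.posSemidef_iff_isHermitian_and_spectrum_nonneg.2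
    ⟨Matrix.isHermitian_iff_isSymm.2 hA, fun μ hμ => ?_⟩
  by_contra hneg
  refine hμ ?_
  have hdet := (h (-μ) (neg_pos.2 (not_le.1 hneg))).isUnit
  rw [← Matrix.isUnit_iff_isUnit_det, ← IsUnit.neg_iff] at hdet
  rw [spectrum.mem_resolventSet_iff, Algebra.algebraMap_eq_smul_one]
  convert hdet using 1
  module

namespace TernaryForm

variable {d : ℕ}

theorem natDegree_eval_le (f : TernaryForm d) {t x y : Polynomial ℂ} (ht : t.natDegree ≤ 1)
    (hx : x.natDegree ≤ 1) (hy : y.natDegree ≤ 1) : (f.eval t x y).natDegree ≤ d := by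
  refine Polynomial.natDegree_sum_le_of_forall_le _ _ fun m _ => ?_
  refine (Polynomial.natDegree_smul_le _ _).trans ?_
  have hmon := Polynomial.natDegree_mul_le_of_le (Polynomial.natDegree_mul_le_of_le
    (Polynomial.natDegree_pow_le_of_le (m.1 0) ht) (Polynomial.natDegree_pow_le_of_le (m.1 1) hx))
    (Polynomial.natDegree_pow_le_of_le (m.1 2) hy)
  rwa [mul_one, mul_one, mul_one, m.sum_eq] at hmon

/-- Nonvanishing of a form on the domain `|Im x| < Im t`, `0 < y`. For a form with
`f(t, x, 1) = p(t + x, t - x)` this is the real stability of `p`. -/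
def IsConeStable (f : TernaryForm d) : Prop :=
  ∀ t x : ℂ, |x.im| < t.im → ∀ y : ℝ, 0 < y → f.eval t x (y : ℂ) ≠ 0

theorem IsConeStable.exists_norm_eval_le {f : TernaryForm d} (hf : f.IsConeStable) {t x : ℂ}
    (htx : |x.im| < t.im) (t' x' : ℂ) :
    ∃ K : ℝ, ∀ y : ℝ, 0 < y → ‖f.eval t' x' (y : ℂ)‖ ≤ K * ‖f.eval t x (y : ℂ)‖ := by
  have isOpen_cone : IsOpen {s : ℂ | |(x + (x' - x) * s).im| < (t + (t' - t) * s).im} :=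
    isOpen_lt (by fun_prop) (by fun_prop)
  obtain ⟨R, hR, hball⟩ := Metric.isOpen_iff.1 isOpen_cone 0 (by simpa using htx)
  refine ⟨(1 + ‖(1 : ℂ)‖ / R) ^ d, fun y hy => ?_⟩
  let q : Polynomial ℂ := f.eval (Polynomial.C t + Polynomial.C (t' - t) * Polynomial.X)
    (Polynomial.C x + Polynomial.C (x' - x) * Polynomial.X) (Polynomial.C (y : ℂ))
  have eval_q (s : ℂ) : q.eval s = f.eval (t + (t' - t) * s) (x + (x' - x) * s) (y : ℂ) := by
    have h := f.map_eval ((Polynomial.aeval (R := ℂ) s).restrictScalars ℝ)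
      (Polynomial.C t + Polynomial.C (t' - t) * Polynomial.X)
      (Polynomial.C x + Polynomial.C (x' - x) * Polynomial.X) (Polynomial.C (y : ℂ))
    simpa [q] using h
  have natDegree_q : q.natDegree ≤ d :=
    f.natDegree_eval_le (by compute_degree) (by compute_degree) (by simp)
  have eval_q_ne_zero (s : ℂ) (hs : ‖s‖ < R) : q.eval s ≠ 0 := by
    rw [eval_q]
    exact hf _ _ (hball (mem_ball_zero_iff.2 hs)) y hy
  simpa [eval_q] using norm_eval_le_of_forall_norm_lt natDegree_q hR eval_q_ne_zero 1

theorem IsConeStable.eval_zero_eq_zero {f : TernaryForm d} (hf : f.IsConeStable) {t x : ℂ}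
    (htx : |x.im| < t.im) (h0 : f.eval t x 0 = 0) (t' x' : ℂ) : f.eval t' x' 0 = 0 := by
  obtain ⟨K, hK⟩ := hf.exists_norm_eval_le htx t' x'
  have isClosed_bound :
      IsClosed {y : ℝ | ‖f.eval t' x' (y : ℂ)‖ ≤ K * ‖f.eval t x (y : ℂ)‖} :=
    isClosed_le (by fun_prop) (by fun_prop)
  have bound_at_zero : (0 : ℝ) ∈ closure (Set.Ioi 0) := by
    rw [closure_Ioi]
    exact Set.self_mem_Ici
  simpa [h0] using isClosed_bound.closure_subset_iff.2 hK bound_at_zero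

open ComplexConjugate in
theorem IsConeStable.eval_ne_zero {f : TernaryForm d} (hf : f.IsConeStable)
    (hinf : ∃ t x : ℝ, f.eval t x 0 ≠ 0) {t x : ℂ} (htx : |x.im| < t.im) (y : ℝ) :
    f.eval t x (y : ℂ) ≠ 0 := by
  rcases lt_trichotomy y 0 with hy | rfl | hy
  · have hflip := hf (-conj t) (-conj x) (by simpa using htx) (-y) (neg_pos.2 hy)
    have hneg := f.eval_mul (-1) (conj t) (conj x) (conj (y : ℂ))
    rw [← conj_eval, Complex.conj_ofReal, neg_one_mul, neg_one_mul, neg_one_mul,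
      ← Complex.ofReal_neg] at hneg
    intro h0
    rw [h0, map_zero, mul_zero] at hneg
    exact hflip hneg
  · obtain ⟨t', x', hne⟩ := hinf
    intro h0
    rw [Complex.ofReal_zero] at h0
    refine hne (Complex.ofReal_injective ?_)
    rw [ofReal_eval, Complex.ofReal_zero]
    exact hf.eval_zero_eq_zero htx h0 t' x'
  · exact hf t x htx y hy

theorem IsConeStable.eval_real_ne_zero {f : TernaryForm d} (hf : f.IsConeStable)
    (hinf : ∃ t x : ℝ, f.eval t x 0 ≠ 0) {t x : ℝ} (htx : |x| < t) : f.eval t x 0 ≠ 0 := by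
  have hne := hf.eval_ne_zero hinf (t := Complex.I * t) (x := Complex.I * x) (by simpa using htx) 0
  have hscale := f.eval_mul Complex.I t x 0
  rw [mul_zero, ← Complex.ofReal_zero, ← ofReal_eval] at hscale
  rw [hscale] at hne
  exact Complex.ofReal_ne_zero.1 (right_ne_zero_of_mul hne)

theorem IsConeStable.isHyperbolic {f : TernaryForm d} (hf : f.IsConeStable)
    (hinf : ∃ t x : ℝ, f.eval t x 0 ≠ 0) : (f.eval (1 : ℝ) 0 0 • f).IsHyperbolic := by
  have lead_ne_zero : f.eval (1 : ℝ) 0 0 ≠ 0 := hf.eval_real_ne_zero hinf (by simp)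
  refine ⟨by rw [eval_smul]; exact mul_self_pos.2 lead_ne_zero, fun x y t ht => ?_⟩
  rw [eval_polyT, eval_smul, smul_eq_zero, or_iff_right lead_ne_zero] at ht
  rcases lt_trichotomy t.im 0 with him | him | him
  · have hconj := f.conj_eval t x y
    rw [ht, map_zero, Complex.conj_ofReal, Complex.conj_ofReal] at hconj
    exact absurd hconj.symm (hf.eval_ne_zero hinf (by simpa using him) y)
  · exact him
  · exact absurd ht (hf.eval_ne_zero hinf (by simpa using him) y)

theorem posSemidef_of_eval_detForm_ne_zero {n : ℕ} {a : ℝ} {A B : Matrix (Fin n) (Fin n) ℝ}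
    (hA : A.IsSymm) (hne : ∀ t x : ℝ, |x| < t → (detForm a A B).eval t x 0 ≠ 0) :
    (1 + A).PosSemidef ∧ (1 - A).PosSemidef := by
  constructor
  · refine posSemidef_of_forall_det_ne_zero (Matrix.isSymm_one.add hA) fun l hl h0 => ?_
    refine hne (l + 1) 1 (by simpa using hl) ?_
    rw [eval_detForm_real, zero_smul, add_zero,
      show (l + 1) • 1 + (1 : ℝ) • A = l • 1 + (1 + A) by module, h0, mul_zero]
  · refine posSemidef_of_forall_det_ne_zero (Matrix.isSymm_one.sub hA) fun l hl h0 => ?_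
    refine hne (l + 1) (-1) (by simpa using hl) ?_
    rw [eval_detForm_real, zero_smul, add_zero,
      show (l + 1) • 1 + (-1 : ℝ) • A = l • 1 + (1 - A) by module, h0, mul_zero]

end TernaryForm

section Homogenization

variable {d : ℕ} {p : MvPolynomial (Fin 2) ℝ}

/-- The form `f(t, x, y) = y ^ d * p((t + x) / y, (t - x) / y)`, for `p` of degree at most `d`. In
these coordinates the positive quadrant becomes the cone `|x| < t` around the `t`-axis. -/
noncomputable def coneHomogenization (d : ℕ) (p : MvPolynomial (Fin 2) ℝ) : TernaryForm d :=
  TernaryForm.ofMvPolynomial d <| ∑ m ∈ p.support, p.coeff m •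
    ((MvPolynomial.X 0 + MvPolynomial.X 1) ^ m 0 * (MvPolynomial.X 0 - MvPolynomial.X 1) ^ m 1 *
      MvPolynomial.X 2 ^ (d - (m 0 + m 1)))

theorem add_le_of_mem_support (hd : p.totalDegree ≤ d) {m : Fin 2 →₀ ℕ} (hm : m ∈ p.support) :
    m 0 + m 1 ≤ d := by
  rw [← Fin.sum_univ_two, ← Finsupp.degree_eq_sum]
  exact (MvPolynomial.le_totalDegree hm).trans hd

theorem eval_coneHomogenization (hd : p.totalDegree ≤ d) {K : Type*} [CommRing K] [Algebra ℝ K]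
    (t x y : K) : (coneHomogenization d p).eval t x y =
      ∑ m ∈ p.support, p.coeff m • ((t + x) ^ m 0 * (t - x) ^ m 1 * y ^ (d - (m 0 + m 1))) := by
  rw [coneHomogenization, TernaryForm.eval_ofMvPolynomial]
  · simp
  refine MvPolynomial.IsHomogeneous.sum _ _ _ fun m hm => ?_
  have hX (i : Fin 3) := MvPolynomial.isHomogeneous_X ℝ i
  have hmon := ((((hX 0).add (hX 1)).pow (m 0)).mul (((hX 0).sub (hX 1)).pow (m 1))).mul
    ((hX 2).pow (d - (m 0 + m 1)))
  rw [one_mul, one_mul, one_mul, Nat.add_sub_cancel' (add_le_of_mem_support hd hm)] at hmon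
  rw [MvPolynomial.smul_eq_C_mul]
  exact hmon.C_mul _

theorem eval_coneHomogenization_one (hd : p.totalDegree ≤ d) {K : Type*} [CommRing K]
    [Algebra ℝ K] (t x : K) :
    (coneHomogenization d p).eval t x 1 = MvPolynomial.aeval ![t + x, t - x] p := by
  rw [eval_coneHomogenization hd, MvPolynomial.aeval_def, MvPolynomial.eval₂_eq']
  simp [Fin.prod_univ_two, Algebra.smul_def]

theorem eval_coneHomogenization_zero (hd : p.totalDegree ≤ d) (t x : ℝ) :
    (coneHomogenization d p).eval t x 0 =
      MvPolynomial.eval ![t + x, t - x] (MvPolynomial.homogeneousComponent d p) := by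
  rw [eval_coneHomogenization hd, MvPolynomial.homogeneousComponent_apply, map_sum,
    Finset.sum_filter]
  refine Finset.sum_congr rfl fun m hm => ?_
  have hle := add_le_of_mem_support hd hm
  rw [Finsupp.degree_eq_sum, Fin.sum_univ_two]
  split_ifs with hdeg
  · simp [MvPolynomial.eval_monomial, Finsupp.prod_fintype, hdeg]
  · rw [zero_pow (by lia), mul_zero, smul_zero]

theorem homogeneousComponent_totalDegree_ne_zero {σ R : Type*} [CommSemiring R]
    {q : MvPolynomial σ R} (hq : q ≠ 0) :
    MvPolynomial.homogeneousComponent q.totalDegree q ≠ 0 := by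
  obtain ⟨m, hm, hdeg⟩ := Finset.exists_mem_eq_sup q.support
    (MvPolynomial.support_nonempty.2 hq) Finsupp.degree
  have hdeg' : m.degree = q.totalDegree := hdeg.symm
  refine MvPolynomial.ne_zero_iff.2 ⟨m, ?_⟩
  rw [MvPolynomial.coeff_homogeneousComponent, if_pos hdeg']
  exact MvPolynomial.mem_support_iff.1 hm

theorem exists_eval_coneHomogenization_zero_ne_zero (hp : p ≠ 0) :
    ∃ t x : ℝ, (coneHomogenization p.totalDegree p).eval t x 0 ≠ 0 := by
  by_contra! hzero
  refine homogeneousComponent_totalDegree_ne_zero hp (MvPolynomial.funext fun v => ?_)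
  have hv : v = ![(v 0 + v 1) / 2 + (v 0 - v 1) / 2, (v 0 + v 1) / 2 - (v 0 - v 1) / 2] := by
    ext i
    fin_cases i <;> simp <;> ring
  rw [hv, ← eval_coneHomogenization_zero le_rfl, hzero, map_zero]

theorem RealStable.isConeStable_coneHomogenization (hst : RealStable p) (hp : p ≠ 0)
    (hd : p.totalDegree ≤ d) : (coneHomogenization d p).IsConeStable := by
  intro t x htx y hy
  have hy0 : (y : ℂ) ≠ 0 := Complex.ofReal_ne_zero.2 hy.ne'
  have hscale := (coneHomogenization d p).eval_mul (y : ℂ) (t / y) (x / y) 1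
  rw [mul_div_cancel₀ _ hy0, mul_div_cancel₀ _ hy0, mul_one, eval_coneHomogenization_one hd]
    at hscale
  rw [hscale]
  obtain ⟨hneg, hpos⟩ := abs_lt.1 htx
  refine mul_ne_zero (pow_ne_zero _ hy0) (hst.resolve_left hp _ (Fin.forall_fin_two.2 ⟨?_, ?_⟩))
  · change 0 < (t / y + x / y).im
    rw [← add_div, Complex.div_ofReal_im, Complex.add_im]
    exact div_pos (neg_lt_iff_pos_add'.1 hneg) hy
  · change 0 < (t / y - x / y).im
    rw [← sub_div, Complex.div_ofReal_im, Complex.sub_im]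
    exact div_pos (sub_pos.2 hpos) hy

theorem RealStable.exists_detForm (hst : RealStable p) {n : ℕ} (hd : p.totalDegree = n + 1) :
    ∃ (a : ℝ) (A B : Matrix (Fin (n + 1)) (Fin (n + 1)) ℝ), (1 + A).PosSemidef ∧
      (1 - A).PosSemidef ∧ B.IsSymm ∧ coneHomogenization (n + 1) p = TernaryForm.detForm a A B := by
  have hp : p ≠ 0 := by
    rintro rfl
    simp at hd
  have hinf := exists_eval_coneHomogenization_zero_ne_zero hp
  rw [hd] at hinf
  have hstab := hst.isConeStable_coneHomogenization hp hd.le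
  set f := coneHomogenization (n + 1) p
  have lead_ne_zero : f.eval (1 : ℝ) 0 0 ≠ 0 := hstab.eval_real_ne_zero hinf (by simp)
  obtain ⟨a, A, B, hA, hB, hdet⟩ := (hstab.isHyperbolic hinf).isDeterminantal
  have hf : f = TernaryForm.detForm ((f.eval (1 : ℝ) 0 0)⁻¹ * a) A B := by
    refine TernaryForm.eq_of_eval_eq fun t x y => ?_
    have heval := congrArg (TernaryForm.eval · t x y) hdet
    simp only [TernaryForm.eval_smul, TernaryForm.eval_detForm_real, smul_eq_mul] at heval
    rw [TernaryForm.eval_detForm_real, mul_assoc, ← heval, inv_mul_cancel_left₀ lead_ne_zero]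
  obtain ⟨hadd, hsub⟩ := TernaryForm.posSemidef_of_eval_detForm_ne_zero hA
    fun t x htx => hf ▸ hstab.eval_real_ne_zero hinf htx
  exact ⟨_, A, B, hadd, hsub, hB, hf⟩

end Homogenization

/-- (Helton–Vinnikov) Every bivariate real stable polynomial `p` of total degree `d` can
be written as `p(x, y) = c · det(xA + yB + C)` with `A, B` real positive semidefinite
`d × d` matrices, `C` real symmetric, and `c` a real constant. -/
theorem stmt19 (d : ℕ) (p : MvPolynomial (Fin 2) ℝ)
    (hst : RealStable p) (hd : p.totalDegree = d) :
    ∃ (A B C : Matrix (Fin d) (Fin d) ℝ) (c : ℝ),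
      A.PosSemidef ∧ B.PosSemidef ∧ C.IsSymm ∧
      ∀ x y : ℝ, MvPolynomial.eval ![x, y] p = c * (x • A + y • B + C).det := by
  cases d with
  | zero =>
    refine ⟨0, 0, 0, p.coeff 0, .zero, .zero, Matrix.isSymm_zero, fun x y => ?_⟩
    rw [MvPolynomial.totalDegree_eq_zero_iff_eq_C.1 hd]
    simp
  | succ n =>
    obtain ⟨a, A, B, hadd, hsub, hB, hdet⟩ := hst.exists_detForm hd
    refine ⟨(1 / 2 : ℝ) • (1 + A), (1 / 2 : ℝ) • (1 - A), B, a, hadd.smul (by norm_num),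
      hsub.smul (by norm_num), hB, fun x y => ?_⟩
    have heval := eval_coneHomogenization_one hd.le ((x + y) / 2) ((x - y) / 2)
    rw [hdet, TernaryForm.eval_detForm_real, MvPolynomial.aeval_eq_eval] at heval
    have hx : (x + y) / 2 + (x - y) / 2 = x := by ring
    have hy : (x + y) / 2 - (x - y) / 2 = y := by ring
    rw [hx, hy] at heval
    rw [← heval]
    congr 2
    module
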